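/- arXiv:2107.14022 — 3 statements merged into one kernel-verified Lean document; each statement's English description precedes it below -/
import Mathlib

section
/- Let A be an alphabet with exactly 6 letters. Then Ann has a winning strategy for the hard game over A: there exists an Ann strategy ψ such that for every Ben strategy φ (a function from nonempty words over A to A ∪ {ε} with φ(v) never equal to the last letter of v), every word arising in the play between ψ and φ is square-free; consequently the shared word becomes arbitrarily long without a square ever appearing. -/
/-- A word is square-free if none of its factors is a square `u ++ u` with `u` nonempty. -/
def SquareFree {A : Type*} (w : List A) : Prop :=
  ∀ u : List A, u ≠ [] → ¬ (u ++ u) <:+: w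

/-- The play of the hard game over the alphabet `A`: starting from the empty word,
Ann (strategy `ψ : List A → A`) and Ben (strategy `φ : List A → Option A`, where
`none` means that Ben skips his turn) alternately move, Ann moving first. -/
def playH {A : Type*} (ψ : List A → A) (φ : List A → Option A) : ℕ → List A
  | 0 => []
  | k + 1 =>
      let w := playH ψ φ k
      if Even k then w ++ [ψ w] else w ++ (φ w).toList

/-!
Words are stored most recent letter first. Ben can complete a square of period `p` exactly when
the word ends in `x c x` with `|x| = p - 1`, a threat of period `p`; Ann survives as long as no
move of hers ends in a threat of period at least `2`. Threats of period `2`, `3`, `4`, `5` are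
avoided by forbidding three letters at each move, which leaves her three.

Longer threats are handled by counting, against a fixed Ben. Let `sₙ` be the number of sequences of
`n` good moves of Ann. If the `(n + 1)`-st move creates a threat of period `p`, her last `⌊p / 2⌋`
letters all lie in the final `x`, hence are determined by the earlier ones, so at most
`s_{n + 1 - ⌊p / 2⌋}` sequences are lost for this `p`. Thus `sₙ₊₁ ≥ 3 sₙ - 2 ∑_{m < n - 1} sₘ`, and
inductively `sₙ₊₁ ≥ (7 / 3) sₙ`. So no Ben strategy wins within `n` rounds; as Ann uses
finitely many letters, compactness turns survival for every `n` into a single strategy.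
-/

namespace HardGame

variable {A : Type*}

/-! ### Threats and guarded words -/

/-- The word, read most recent letter first, starts with `x c x` where `|x| + 1 = p`: if the next
letter is `c`, then a square of period `p` is completed. -/
def Threat (p : ℕ) (w : List A) : Prop :=
  ∃ (x : List A) (c : A), x.length + 1 = p ∧ x ++ c :: x <+: w

theorem Threat.two_mul_le_length {p : ℕ} {w : List A} (h : Threat p w) : 2 * p ≤ w.length + 1 := by
  obtain ⟨x, c, rfl, hx⟩ := h
  have := hx.length_le
  simp only [List.length_append, List.length_cons] at this
  omega

theorem Threat.getElem?_add {p i : ℕ} {w : List A} (h : Threat p w) (hi : i + 1 < p) :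
    w[i + p]? = w[i]? := by
  obtain ⟨x, c, rfl, y, rfl⟩ := h
  simp only [List.append_assoc, List.cons_append]
  rw [List.getElem?_append_right (by omega), show i + (x.length + 1) - x.length = i + 1 by omega,
    List.getElem?_cons_succ, List.getElem?_append_left (by omega),
    List.getElem?_append_left (by omega)]

open Classical in
/-- The letter with which Ann might create a threat of period `3`, `4` or `5` while avoiding the
last two letters of `w`. Such a threat of period `p` requires `w[0] = w[p]` and the letter
`w[p - 1]`; the default `w[4]` serves `p = 5`. -/
noncomputable def trapLetter (w : List A) : Option A :=
  if w[0]? = w[3]? then w[2]? else if w[0]? = w[4]? then w[3]? else w[4]?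

open Classical in
/-- The letters that Ann avoids at `w` in order not to create a threat of period at most `5`. -/
noncomputable def forbidden (w : List A) : Finset A :=
  (w.take 2 ++ (trapLetter w).toList).toFinset

theorem card_forbidden_le (w : List A) : (forbidden w).card ≤ 3 := by
  classical
  refine (List.toFinset_card_le _).trans ?_
  have : (trapLetter w).toList.length ≤ 1 := by cases trapLetter w <;> simp
  simp only [List.length_append, List.length_take]
  omega

/-- The moves that Ann allows herself at the word `w`. -/
def Safe (w : List A) (a : A) : Prop :=
  a ∉ forbidden w ∧ ∀ p, 6 ≤ p → ¬ Threat p (a :: w)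

/-- The words, most recent letter first, that may stand at Ann's turn if all her moves are safe;
the constructors distinguish whether Ben skipped his last turn. -/
inductive Guarded : List A → Prop
  | nil : Guarded []
  | skip {w : List A} {a : A} (hw : Guarded w) (ha : Safe w a) : Guarded (a :: w)
  | reply {w : List A} {a b : A} (hw : Guarded w) (ha : Safe w a) (hb : b ≠ a) :
      Guarded (b :: a :: w)

theorem Guarded.of_cons {w : List A} {a : A} (h : Guarded (a :: w)) : Guarded w := by
  cases h with
  | skip hw _ => exact hw
  | reply hw ha _ => exact hw.skip ha

theorem Guarded.of_append {v w : List A} (h : Guarded (v ++ w)) : Guarded w := by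
  induction v with
  | nil => exact h
  | cons a v ih => exact ih h.of_cons

theorem Guarded.ne {w : List A} {a b : A} (h : Guarded (b :: a :: w)) : b ≠ a := by
  cases h with
  | skip _ hb =>
    rintro rfl
    exact hb.1 (by simp [forbidden])
  | reply _ _ hb => exact hb

/-- After such a word, both `z` and `t` would create threats, of periods `3` and `5`, while
`trapLetter` rules out only one letter. -/
theorem not_guarded_of_double_trap {b y z t : A} {w : List A} :
    ¬ Guarded (b :: y :: z :: b :: t :: b :: y :: z :: w) := by
  intro h
  have hby : b ≠ y := h.ne
  have hyz : y ≠ z := h.of_cons.ne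
  have hzb : z ≠ b := h.of_cons.of_cons.ne
  cases h with
  | skip _ hb =>
    refine hb.1 ?_
    by_cases hyt : y = t <;> simp [forbidden, trapLetter, hyt, hby.symm]
  | reply _ hy _ =>
    refine hy.1 ?_
    simp [forbidden, trapLetter, hzb, hyz.symm]

theorem not_threat_of_notMem_forbidden {w : List A} {a : A} {p : ℕ} (hw : Guarded w)
    (ha : a ∉ forbidden w) (hp : 2 ≤ p) (hp' : p < 6) : ¬ Threat p (a :: w) := by
  rintro ⟨x, c, rfl, y, hxy⟩
  match x, hp, hp', hxy with
  | [x₀], _, _, rfl => exact ha (by simp [forbidden])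
  | [x₀, x₁], _, _, rfl => exact ha (by simp [forbidden, trapLetter])
  | [x₀, x₁, x₂], _, _, rfl =>
    refine ha ?_
    by_cases h₁₀ : x₁ = x₀ <;> simp [forbidden, trapLetter, h₁₀]
  | [x₀, x₁, x₂, x₃], _, _, rfl =>
    by_cases h₁c : x₁ = c
    · subst h₁c
      exact not_guarded_of_double_trap hw
    · refine ha ?_
      by_cases h₁₀ : x₁ = x₀ <;> simp [forbidden, trapLetter, h₁₀, h₁c]
  | _ :: _ :: _ :: _ :: _ :: _, _, hp', _ =>
    simp only [List.length_cons] at hp'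
    omega

theorem Safe.not_threat {w : List A} {a : A} {p : ℕ} (ha : Safe w a) (hw : Guarded w)
    (hp : 2 ≤ p) : ¬ Threat p (a :: w) := by
  obtain hp' | hp' := lt_or_ge p 6
  · exact not_threat_of_notMem_forbidden hw ha.1 hp hp'
  · exact ha.2 p hp'

/-- One of the last two words in the play was produced by Ann. -/
theorem Guarded.not_threat_and_threat {w : List A} {b : A} {p : ℕ} (h : Guarded (b :: w))
    (hp : 2 ≤ p) : ¬ (Threat p (b :: w) ∧ Threat p w) := by
  cases h with
  | skip hw hb => exact fun h => hb.not_threat hw hp h.1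
  | reply hw ha _ => exact fun h => ha.not_threat hw hp h.2

theorem threat_of_square {u : List A} (hu : u ≠ []) (y : List A) :
    Threat u.length (u ++ u ++ y) := by
  refine ⟨u.dropLast, u.getLast hu, ?_, [u.getLast hu] ++ y, ?_⟩
  · rw [List.length_dropLast, Nat.sub_add_cancel (List.length_pos_iff.2 hu)]
  · conv_rhs => rw [← List.dropLast_append_getLast hu]
    simp

theorem Guarded.squareFree {w : List A} (hw : Guarded w) : SquareFree w := by
  rintro u hu ⟨v, y, rfl⟩
  rw [List.append_assoc] at hw
  replace hw := hw.of_append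
  match u, hu with
  | [c], _ => exact hw.ne rfl
  | c :: d :: x, hu =>
    exact hw.not_threat_and_threat (by simp)
      ⟨threat_of_square hu y, d :: x, c, rfl, y, by simp⟩

/-! ### Counting Ann's safe move sequences -/

/-- All sequences `a :: s` with `s ∈ T`, `a ∈ L` and `Q s a`. -/
noncomputable def extensions (L : Finset A) (Q : List A → A → Prop) (T : Finset (List A)) :
    Finset (List A) :=
  open Classical in (T.sigma fun s => {a ∈ L | Q s a}).image fun x => x.2 :: x.1

section Extensions

variable {L : Finset A} {Q : List A → A → Prop} {T : Finset (List A)}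

theorem mem_extensions {t : List A} :
    t ∈ extensions L Q T ↔ ∃ a s, t = a :: s ∧ s ∈ T ∧ a ∈ L ∧ Q s a := by
  simp only [extensions, Finset.mem_image, Finset.mem_sigma, Finset.mem_filter]
  constructor
  · rintro ⟨⟨s, a⟩, ⟨hs, ha, hQ⟩, rfl⟩
    exact ⟨a, s, rfl, hs, ha, hQ⟩
  · rintro ⟨a, s, rfl, hs, ha, hQ⟩
    exact ⟨⟨s, a⟩, ⟨hs, ha, hQ⟩, rfl⟩

open Classical in
theorem mul_card_le_card_extensions {k : ℕ} (hk : ∀ s ∈ T, k ≤ {a ∈ L | Q s a}.card) :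
    k * T.card ≤ (extensions L Q T).card := by
  have hinj : Function.Injective fun x : (_ : List A) × A => x.2 :: x.1 := by
    rintro ⟨s, a⟩ ⟨s', a'⟩ h
    obtain ⟨rfl, rfl⟩ := List.cons.inj h
    rfl
  rw [extensions, Finset.card_image_of_injective _ hinj, Finset.card_sigma, mul_comm,
    ← smul_eq_mul]
  exact Finset.card_nsmul_le_sum _ _ _ hk

end Extensions

section Position

variable (β : ℕ → A → List A → Option A)

/-- The word reached when Ann has played the letters `s` (latest first) and Ben has answered with
`β`, where `β k a w` is his reply in round `k` to the letter `a` that Ann has appended to `w`. -/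
def position : List A → List A
  | [] => []
  | a :: s => (β s.length a (position s)).toList ++ a :: position s

/-- The word reached when Ann has played the letters `s` (latest first), before Ben's reply to the
last of them. -/
def beforeReply : List A → List A
  | [] => []
  | a :: s => a :: position β s

theorem exists_position_append (s t : List A) :
    ∃ v : List A, v.length ≤ 2 * s.length ∧ position β (s ++ t) = v ++ position β t := by
  induction s with
  | nil => exact ⟨[], by simp, rfl⟩
  | cons a s ih =>
    obtain ⟨v, hv, hst⟩ := ih
    refine ⟨(β (s ++ t).length a (position β (s ++ t))).toList ++ a :: v, ?_, ?_⟩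
    · have := Option.length_toList_le (o := β (s ++ t).length a (position β (s ++ t)))
      simp only [List.length_append, List.length_cons] at this ⊢
      omega
    · simp [position, hst]

theorem length_position_le (s : List A) : (position β s).length ≤ 2 * s.length := by
  obtain ⟨v, hv, hs⟩ := exists_position_append β s []
  simp only [position, List.append_nil] at hs
  exact hs ▸ hv

theorem exists_beforeReply_append (s t : List A) (a : A) :
    ∃ v : List A, v.length ≤ 2 * s.length ∧
      beforeReply β (s ++ a :: t) = v ++ a :: position β t := by
  cases s with
  | nil => exact ⟨[], by simp, rfl⟩
  | cons c s =>
    obtain ⟨v, hv, hs⟩ := exists_position_append β s (a :: t)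
    refine ⟨c :: v ++ (β t.length a (position β t)).toList, ?_, ?_⟩
    · have := Option.length_toList_le (o := β t.length a (position β t))
      simp only [List.length_append, List.length_cons]
      omega
    · simp [beforeReply, hs, position]

variable {β}

theorem Threat.getElem?_position {p : ℕ} {s t : List A} {a : A}
    (h : Threat p (beforeReply β (s ++ a :: t))) (hp : 2 * (s.length + 1) ≤ p) :
    (position β t)[p - 1]? = some a := by
  obtain ⟨v, hv, hs⟩ := exists_beforeReply_append β s t a
  rw [hs] at h
  obtain ⟨q, rfl⟩ : ∃ q, p = q + 1 := ⟨p - 1, by omega⟩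
  have hper := h.getElem?_add (i := v.length) (by omega)
  rwa [List.getElem?_append_right (by omega), Nat.add_sub_cancel_left,
    List.getElem?_cons_succ, List.getElem?_append_right le_rfl, Nat.sub_self,
    List.getElem?_cons_zero] at hper

/-- Ann's last `⌊p / 2⌋` letters lie in the last `p - 1` letters of the word, so under a threat of
period `p` they are copies of older ones. -/
theorem eq_of_threat_beforeReply {p : ℕ} {s s' t : List A} (hlen : s.length = s'.length)
    (hp : 2 * s.length ≤ p) (h : Threat p (beforeReply β (s ++ t)))
    (h' : Threat p (beforeReply β (s' ++ t))) : s = s' := by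
  induction s using List.reverseRecOn generalizing s' t with
  | nil => exact (List.length_eq_zero_iff.1 hlen.symm).symm
  | append_singleton s a ih =>
    rcases List.eq_nil_or_concat' s' with rfl | ⟨s', a', rfl⟩
    · simp at hlen
    simp only [List.length_append, List.length_singleton, Nat.add_right_cancel_iff] at hlen hp
    simp only [List.append_assoc, List.singleton_append] at h h'
    have ha := h.getElem?_position hp
    have ha' := h'.getElem?_position (hlen ▸ hp)
    obtain rfl : a = a' := Option.some.inj (ha.symm.trans ha')
    rw [ih hlen (by omega) h h']

end Position

section Survivors

variable (β : ℕ → A → List A → Option A) (L : Finset A)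

/-- The sequences (latest first) of `n` safe moves of Ann with letters in `L` against `β`. -/
noncomputable def survivors : ℕ → Finset (List A)
  | 0 => {[]}
  | n + 1 => extensions L (fun s => Safe (position β s)) (survivors n)

/-- The extensions of sequences of `n` safe moves by a move that is not forbidden. -/
noncomputable def candidates (n : ℕ) : Finset (List A) :=
  extensions L (fun s a => a ∉ forbidden (position β s)) (survivors β L n)

/-- The extensions of sequences of `n` safe moves by a move that creates a threat of period `p`. -/
noncomputable def threatened (n p : ℕ) : Finset (List A) :=
  extensions L (fun s a => Threat p (a :: position β s)) (survivors β L n)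

variable {β L}

theorem length_of_mem_survivors {n : ℕ} {s : List A} (hs : s ∈ survivors β L n) :
    s.length = n := by
  induction n generalizing s with
  | zero => simpa [survivors] using hs
  | succ n ih =>
    obtain ⟨a, s, rfl, hs, -⟩ := mem_extensions.1 hs
    rw [List.length_cons, ih hs]

theorem subset_of_mem_survivors {n : ℕ} {s : List A} (hs : s ∈ survivors β L n) :
    ∀ a ∈ s, a ∈ L := by
  induction n generalizing s with
  | zero => simp_all [survivors]
  | succ n ih =>
    obtain ⟨a, s, rfl, hs, ha, -⟩ := mem_extensions.1 hs
    exact List.forall_mem_cons.2 ⟨ha, ih hs⟩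

theorem guarded_position (hβ : ∀ k a w, β k a w ≠ some a) {n : ℕ} {s : List A}
    (hs : s ∈ survivors β L n) : Guarded (position β s) := by
  induction n generalizing s with
  | zero =>
    obtain rfl : s = [] := by simpa [survivors] using hs
    exact .nil
  | succ n ih =>
    obtain ⟨a, s, rfl, hs, -, ha⟩ := mem_extensions.1 hs
    have hlegal := hβ s.length a (position β s)
    rw [position]
    cases hb : β s.length a (position β s) with
    | none => exact (ih hs).skip ha
    | some b => exact (ih hs).reply ha fun hba => hlegal (hba ▸ hb)

theorem drop_mem_survivors {n k : ℕ} {s : List A} (hs : s ∈ survivors β L (n + k)) :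
    s.drop k ∈ survivors β L n := by
  induction k generalizing s with
  | zero => exact hs
  | succ k ih =>
    obtain ⟨a, s, rfl, hs, -⟩ := mem_extensions.1 hs
    exact ih hs

theorem three_mul_card_survivors_le_card_candidates (hL : 6 ≤ L.card) (n : ℕ) :
    3 * (survivors β L n).card ≤ (candidates β L n).card := by
  classical
  refine mul_card_le_card_extensions fun s _ => ?_
  calc 3 ≤ L.card - (forbidden (position β s)).card :=
        Nat.le_sub_of_add_le ((Nat.add_le_add_left (card_forbidden_le _) 3).trans hL)
    _ ≤ (L \ forbidden (position β s)).card := Finset.le_card_sdiff _ _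
    _ ≤ _ := Finset.card_le_card fun a ha => by simpa using ha

theorem card_threatened_le {m j p : ℕ} (hp : 2 * (j + 1) ≤ p) :
    (threatened β L (m + j) p).card ≤ (survivors β L m).card := by
  have hmem {t : List A} (ht : t ∈ threatened β L (m + j) p) :
      t.length = m + j + 1 ∧ Threat p (beforeReply β t) := by
    obtain ⟨a, s, rfl, hs, -, hthreat⟩ := mem_extensions.1 ht
    exact ⟨by rw [List.length_cons, length_of_mem_survivors hs], hthreat⟩
  refine Finset.card_le_card_of_injOn (List.drop (j + 1)) (fun t ht => ?_) fun t ht t' ht' heq => ?_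
  · obtain ⟨a, s, rfl, hs, -⟩ := mem_extensions.1 ht
    exact (drop_mem_survivors hs :)
  · obtain ⟨ht, hthreat⟩ := hmem ht
    obtain ⟨ht', hthreat'⟩ := hmem ht'
    rw [← List.take_append_drop (j + 1) t] at hthreat
    rw [← List.take_append_drop (j + 1) t', ← heq] at hthreat'
    have htake : t.take (j + 1) = t'.take (j + 1) :=
      eq_of_threat_beforeReply (by simp [ht, ht']) (by simp; omega) hthreat hthreat'
    rw [← List.take_append_drop (j + 1) t, htake, heq, List.take_append_drop]

theorem mem_survivors_or_threatened {n : ℕ} {t : List A} (ht : t ∈ candidates β L n) :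
    t ∈ survivors β L (n + 1) ∨ ∃ p, 6 ≤ p ∧ p ≤ n + 1 ∧ t ∈ threatened β L n p := by
  obtain ⟨a, s, rfl, hs, ha, hfree⟩ := mem_extensions.1 ht
  by_cases hsafe : Safe (position β s) a
  · exact .inl (mem_extensions.2 ⟨a, s, rfl, hs, ha, hsafe⟩)
  obtain ⟨p, hp, hthreat⟩ : ∃ p, 6 ≤ p ∧ Threat p (a :: position β s) := by
    simpa [Safe, hfree] using hsafe
  have hlen := hthreat.two_mul_le_length
  have hpos := length_position_le β s
  rw [length_of_mem_survivors hs] at hpos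
  rw [List.length_cons] at hlen
  exact .inr ⟨p, hp, by omega, mem_extensions.2 ⟨a, s, rfl, hs, ha, hthreat⟩⟩

open Classical in
/-- Grouping the periods `2 * k` and `2 * k + 1` by the number `m = n + 1 - k` of moves that
remain after the last `k` are deleted. -/
theorem candidates_subset (n : ℕ) :
    candidates β L n ⊆ survivors β L (n + 1) ∪ (Finset.range (n - 1)).biUnion fun m =>
      threatened β L n (2 * (n - m + 1)) ∪ threatened β L n (2 * (n - m + 1) + 1) := by
  intro t ht
  obtain hsurv | ⟨p, hp, hpn, hthreat⟩ := mem_survivors_or_threatened ht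
  · exact Finset.mem_union_left _ hsurv
  refine Finset.mem_union_right _ (Finset.mem_biUnion.2 ⟨n + 1 - p / 2, ?_, ?_⟩)
  · rw [Finset.mem_range]
    omega
  · rw [show n - (n + 1 - p / 2) + 1 = p / 2 by omega, Finset.mem_union]
    obtain heven | hodd := p.even_or_odd
    · exact .inl (by rwa [Nat.two_mul_div_two_of_even heven])
    · exact .inr (by rwa [Nat.two_mul_div_two_add_one_of_odd hodd])

theorem three_mul_card_survivors_le_add_sum (hL : 6 ≤ L.card) (n : ℕ) :
    3 * (survivors β L n).card ≤ (survivors β L (n + 1)).card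
      + 2 * ∑ m ∈ Finset.range (n - 1), (survivors β L m).card := by
  classical
  refine (three_mul_card_survivors_le_card_candidates hL n).trans <|
    (Finset.card_le_card (candidates_subset n)).trans <| (Finset.card_union_le _ _).trans ?_
  rw [Finset.mul_sum]
  gcongr
  refine Finset.card_biUnion_le.trans (Finset.sum_le_sum fun m hm => ?_)
  obtain ⟨j, rfl⟩ := Nat.exists_eq_add_of_le (show m ≤ n by rw [Finset.mem_range] at hm; omega)
  rw [Nat.add_sub_cancel_left, two_mul (survivors β L m).card]
  exact (Finset.card_union_le _ _).trans <|
    add_le_add (card_threatened_le le_rfl) (card_threatened_le (by omega))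

/-- The rate `7 / 3` is reproduced by the recurrence: it bounds the sum by
`s n / (7 / 3 - 1) = (3 / 4) * s n`, and `3 - 2 * (3 / 4) * (3 / 7) = 33 / 14 ≥ 7 / 3`. -/
theorem sum_le_and_le_succ_of_recurrence {s : ℕ → ℕ}
    (hs : ∀ n, 3 * s n ≤ s (n + 1) + 2 * ∑ m ∈ Finset.range (n - 1), s m) (n : ℕ) :
    4 * ∑ m ∈ Finset.range n, s m ≤ 3 * s n ∧ 7 * s n ≤ 3 * s (n + 1) := by
  induction n with
  | zero =>
    have := hs 0
    simp only [Nat.zero_sub, Finset.range_zero, Finset.sum_empty] at this ⊢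
    omega
  | succ n ih =>
    have := hs (n + 1)
    rw [Nat.add_sub_cancel] at this
    rw [Finset.sum_range_succ]
    omega

theorem survivors_nonempty (hL : 6 ≤ L.card) (n : ℕ) : (survivors β L n).Nonempty := by
  rw [← Finset.card_pos]
  induction n with
  | zero => simp [survivors]
  | succ n ih =>
    have := (sum_le_and_le_succ_of_recurrence
      (three_mul_card_survivors_le_add_sum (β := β) hL) n).2
    omega

end Survivors

/-! ### From finite survival to a strategy -/

theorem playH_two_mul_add_one (ψ : List A → A) (φ : List A → Option A) (k : ℕ) :
    playH ψ φ (2 * k + 1) = playH ψ φ (2 * k) ++ [ψ (playH ψ φ (2 * k))] := by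
  simp [playH]

theorem playH_two_mul_succ (ψ : List A → A) (φ : List A → Option A) (k : ℕ) :
    playH ψ φ (2 * (k + 1)) =
      playH ψ φ (2 * k + 1) ++ (φ (playH ψ φ (2 * k + 1))).toList := by
  simp [mul_add, playH]

theorem le_length_playH (ψ : List A → A) (φ : List A → Option A) (k : ℕ) :
    k ≤ (playH ψ φ (2 * k)).length := by
  induction k with
  | zero => exact Nat.zero_le _
  | succ k ih =>
    rw [playH_two_mul_succ, playH_two_mul_add_one]
    simp only [List.length_append, List.length_singleton]
    omega

section Determinacy

/-- From the word `w` (most recent letter first) and with Ann to move, Ann can play `n` rounds with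
letters in `L` after which `P` holds, whatever Ben does. -/
def Survives (P : List A → Prop) (L : Finset A) : ℕ → List A → Prop
  | 0, w => P w
  | n + 1, w => ∃ a ∈ L, ∀ b : Option A, b ≠ some a → Survives P L n (b.toList ++ a :: w)

variable {P : List A → Prop} {L : Finset A}

theorem survives_nil_of_forall_reply {n : ℕ}
    (h : ∀ β : ℕ → A → List A → Option A, (∀ k a w, β k a w ≠ some a) →
      ∃ s : List A, s.length = n ∧ (∀ a ∈ s, a ∈ L) ∧ P (position β s)) :
    Survives P L n [] := by
  by_contra hlose
  have hreply (k : ℕ) (a : A) (w : List A) : ∃ b : Option A, b ≠ some a ∧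
      ((∃ b', b' ≠ some a ∧ ¬ Survives P L k (b'.toList ++ a :: w)) →
        ¬ Survives P L k (b.toList ++ a :: w)) := by
    by_cases hw : ∃ b', b' ≠ some a ∧ ¬ Survives P L k (b'.toList ++ a :: w)
    · exact hw.imp fun b hb => ⟨hb.1, fun _ => hb.2⟩
    · exact ⟨none, by simp, fun hw' => absurd hw' hw⟩
  choose reply reply_ne reply_spec using hreply
  let β (k : ℕ) := reply (n - (k + 1))
  have not_survives (s : List A) (hsL : ∀ a ∈ s, a ∈ L) (hsn : s.length ≤ n) :
      ¬ Survives P L (n - s.length) (position β s) := by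
    induction s with
    | nil => exact hlose
    | cons a s ih =>
      rw [List.forall_mem_cons] at hsL
      rw [List.length_cons] at hsn
      have hs := ih hsL.2 (by omega)
      rw [show n - s.length = n - (s.length + 1) + 1 by omega] at hs
      refine reply_spec _ a _ ?_
      by_contra! hall
      exact hs ⟨a, hsL.1, hall⟩
  obtain ⟨s, rfl, hsL, hs⟩ := h β fun k => reply_ne _
  exact not_survives s hsL le_rfl (by rwa [Nat.sub_self])

variable (hP : ∀ a w, P (a :: w) → P w)
include hP

theorem antitone_survives (w : List A) : Antitone fun n => Survives P L n w := by
  refine antitone_nat_of_succ_le fun n => ?_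
  induction n generalizing w with
  | zero =>
    rintro ⟨a, -, h⟩
    exact hP a w (h none (by simp))
  | succ n ih =>
    rintro ⟨a, ha, h⟩
    exact ⟨a, ha, fun b hb => ih _ (h b hb)⟩

theorem exists_forall_survives {w : List A} (h : ∀ n, Survives P L n w) :
    ∃ a ∈ L, ∀ b : Option A, b ≠ some a → ∀ n, Survives P L n (b.toList ++ a :: w) := by
  by_contra! hlose
  choose! b hb n hn using hlose
  obtain ⟨a, ha, hsurv⟩ := h (L.sup n + 1)
  exact hn a ha (antitone_survives hP _ (Finset.le_sup ha) (hsurv (b a) (hb a ha)))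

theorem exists_strategy_of_forall_survives (h : ∀ n, Survives P L n []) :
    ∃ ψ : List A → A, (∀ w, ψ w ∈ L) ∧ ∀ φ : List A → Option A,
      (∀ v : List A, v ≠ [] → φ v ≠ v.getLast?) → ∀ k, P (playH ψ φ k).reverse := by
  obtain ⟨a₀, ha₀, -⟩ := h 1
  have hmove (w : List A) : ∃ a ∈ L, (∀ n, Survives P L n w.reverse) →
      ∀ b : Option A, b ≠ some a → ∀ n, Survives P L n (b.toList ++ a :: w.reverse) := by
    by_cases hw : ∀ n, Survives P L n w.reverse
    · exact (exists_forall_survives hP hw).imp fun a ha => ⟨ha.1, fun _ => ha.2⟩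
    · exact ⟨a₀, ha₀, fun hw' => absurd hw' hw⟩
  choose ψ hψL hψ using hmove
  refine ⟨ψ, hψL, fun φ hφ => ?_⟩
  have hsurv (k : ℕ) : ∀ n, Survives P L n (playH ψ φ (2 * k)).reverse := by
    induction k with
    | zero => exact h
    | succ k ih =>
      have hlegal : φ (playH ψ φ (2 * k + 1)) ≠ some (ψ (playH ψ φ (2 * k))) := by
        simpa [playH_two_mul_add_one] using hφ (playH ψ φ (2 * k + 1))
      have hrev (b : Option A) : b.toList.reverse = b.toList := by cases b <;> rfl
      simpa [playH_two_mul_succ, playH_two_mul_add_one, hrev] using hψ _ ih _ hlegal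
  intro k
  obtain ⟨m, rfl | rfl⟩ := k.even_or_odd'
  · exact hsurv m 0
  · simpa [playH_two_mul_add_one, Survives] using hψ _ (hsurv m) none (by simp) 0

end Determinacy

theorem survives_squareFree {L : Finset A} (hL : 6 ≤ L.card) (n : ℕ) :
    Survives SquareFree L n [] := by
  refine survives_nil_of_forall_reply fun β hβ => ?_
  obtain ⟨s, hs⟩ := survivors_nonempty (β := β) hL n
  exact ⟨s, length_of_mem_survivors hs, subset_of_mem_survivors hs,
    (guarded_position hβ hs).squareFree⟩

theorem squareFree_of_cons (a : A) (w : List A) (h : SquareFree (a :: w)) : SquareFree w :=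
  fun u hu huw => h u hu (huw.trans (List.suffix_cons a w).isInfix)

theorem squareFree_of_reverse {w : List A} (h : SquareFree w.reverse) : SquareFree w := by
  intro u hu huw
  refine h u.reverse (by simpa using hu) ?_
  rwa [← List.reverse_append, List.reverse_infix]

end HardGame

theorem stmt_2_general {A : Type*} (L : Finset A) (hL : 6 ≤ L.card) :
    ∃ ψ : List A → A, (∀ w, ψ w ∈ L) ∧ ∀ φ : List A → Option A,
      (∀ v : List A, v ≠ [] → φ v ≠ v.getLast?) →
      (∀ k : ℕ, SquareFree (playH ψ φ k)) ∧
      (∀ N : ℕ, ∃ k : ℕ, N ≤ (playH ψ φ k).length) := by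
  obtain ⟨ψ, hψL, hψ⟩ := HardGame.exists_strategy_of_forall_survives
    HardGame.squareFree_of_cons (HardGame.survives_squareFree hL)
  exact ⟨ψ, hψL, fun φ hφ => ⟨fun k => HardGame.squareFree_of_reverse (hψ φ hφ k),
    fun N => ⟨2 * N, HardGame.le_length_playH ψ φ N⟩⟩⟩

/-- Over an alphabet with exactly 6 letters, Ann has a winning strategy for the hard
game: there is an Ann strategy `ψ` such that against every Ben strategy `φ` (which on a
nonempty word never plays its last letter, but may skip), every word arising in the play
is square-free; consequently the shared word becomes arbitrarily long without a square
ever appearing. -/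
theorem stmt_2 (A : Type*) [Fintype A] (hA : Fintype.card A = 6) :
    ∃ ψ : List A → A, ∀ φ : List A → Option A,
      (∀ v : List A, v ≠ [] → φ v ≠ v.getLast?) →
      (∀ k : ℕ, SquareFree (playH ψ φ k)) ∧
      (∀ N : ℕ, ∃ k : ℕ, N ≤ (playH ψ φ k).length) :=
  (stmt_2_general Finset.univ hA.ge).imp fun _ hψ => hψ.2
end

section
/- Let A be a finite alphabet with at least 7 letters. Then Ann has a winning strategy for the hard game over A: there exists an Ann strategy ψ such that for every Ben strategy φ (a function from nonempty words over A to A ∪ {ε} with φ(v) never equal to the last letter of v), every word arising in the play between ψ and φ is square-free. -/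
/-!
Read the current word backwards and, for each period `p > 0`, let `run p` be the length of the
longest initial stretch that agrees with its shift by `p`; a square of period `p` has just been
completed exactly when this run reaches `p`. A round lengthens a run by at most two, so
`⌈(p - run p) / 2⌉` is the least number of rounds completing the square, and period `p` is given the
weight `q ^ ⌈(p - run p) / 2⌉`. Each period continues its run under at most one letter, hence the
total weight splits among the letters. If it is less than `n * q`, then one of any `n` letters
continues only runs of total weight less than `q`. When Ann plays such a letter, no square can be
completed in this round, the weights of the continued runs grow by a factor of at most `1 / q`,
hence to less than `1`, and all other runs restart from scratch, with total weight at most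
`q + 2 * q / (1 - q)`. The argument repeats as long as `1 + q + 2 * q / (1 - q) ≤ n * q`. The least
real `n` allowing this is `4 + 2 * √2 ≈ 6.83`, attained at `q = √2 - 1`, so that `n = 7` works with
the nearby value `q = 2 / 5`.
-/

namespace HardGame

section SquareFree

variable {A : Type*}

lemma squareFree_nil : SquareFree ([] : List A) := by
  intro u hu h
  simp_all

lemma squareFree_reverse {w : List A} : SquareFree w.reverse ↔ SquareFree w := by
  suffices key : ∀ w : List A, SquareFree w → SquareFree w.reverse from
    ⟨fun h ↦ by simpa using key _ h, key w⟩
  intro w hw u hu h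
  refine hw u.reverse (by simpa using hu) ?_
  rwa [← List.reverse_infix, List.reverse_append, List.reverse_reverse]

end SquareFree

section Run

variable {A : Type*} [DecidableEq A] {p : ℕ} {x a : A} {v : List A}

/-- The length of the longest initial stretch of a word that agrees with its shift by `p`. It is
applied to the reversed current word, so that the stretch ends at the latest letter. -/
def run (p : ℕ) : List A → ℕ
  | [] => 0
  | x :: v => if (x :: v)[p]? = some x then run p v + 1 else 0

lemma run_cons_of_ne (h : (x :: v)[p]? ≠ some x) : run p (x :: v) = 0 :=
  if_neg h

lemma run_cons_le (p : ℕ) (x : A) (v : List A) : run p (x :: v) ≤ run p v + 1 := by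
  rw [run]
  split_ifs <;> omega

lemma run_append_le (p : ℕ) (u v : List A) : run p (u ++ v) ≤ run p v + u.length := by
  induction u with
  | nil => simp
  | cons x u ih =>
    have := run_cons_le p x (u ++ v)
    simp only [List.cons_append, List.length_cons]
    omega

lemma length_le_run {s : List A} (hv : s <+: v) (hd : s <+: v.drop p) : s.length ≤ run p v := by
  induction s generalizing v with
  | nil => simp
  | cons x s ih =>
    obtain ⟨t, rfl⟩ := hv
    obtain ⟨t', ht'⟩ := hd
    have hx : (x :: (s ++ t))[p]? = some x := by
      simpa using congrArg List.head? ht'.symm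
    have hs : s ++ t' = (s ++ t).drop p := by
      simpa using congrArg List.tail ht'
    have := ih (List.prefix_append s t) ⟨t', hs⟩
    simpa [run, hx] using this

lemma squareFree_cons (hv : SquareFree v) (h : ∀ p, 0 < p → run p (x :: v) < p) :
    SquareFree (x :: v) := by
  intro u hu hsq
  rcases List.infix_cons_iff.1 hsq with ⟨t, ht⟩ | hsq
  · refine (h u.length (List.length_pos_iff.2 hu)).not_ge (length_le_run ?_ ?_) <;>
      simp [← ht]
  · exact hv u hu hsq

/-- The periods whose run on the reversed word `v` is continued by playing the letter `a`. -/
def threats (a : A) (v : List A) : Finset ℕ :=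
  {p ∈ Finset.Icc 1 v.length | (a :: v)[p]? = some a}

lemma mem_threats : p ∈ threats a v ↔ 0 < p ∧ (a :: v)[p]? = some a := by
  simp only [threats, Finset.mem_filter, Finset.mem_Icc]
  refine ⟨fun h ↦ ⟨h.1.1, h.2⟩, fun h ↦ ⟨⟨h.1, ?_⟩, h.2⟩⟩
  obtain ⟨hp, -⟩ := List.getElem?_eq_some_iff.1 h.2
  simpa [Nat.lt_succ_iff] using hp

lemma threats_subset_Icc {n : ℕ} (hn : v.length ≤ n) : threats a v ⊆ Finset.Icc 1 n :=
  (Finset.filter_subset _ _).trans (Finset.Icc_subset_Icc_right hn)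

lemma disjoint_threats {a b : A} (hab : a ≠ b) (v : List A) :
    Disjoint (threats a v) (threats b v) := by
  refine Finset.disjoint_left.2 fun p ha hb ↦ hab ?_
  obtain ⟨hp, ha⟩ := mem_threats.1 ha
  obtain ⟨-, hb⟩ := mem_threats.1 hb
  obtain ⟨k, rfl⟩ := Nat.exists_eq_succ_of_ne_zero hp.ne'
  exact Option.some.inj (ha.symm.trans hb)

variable {b : Option A}

lemma run_round_le_one (hp : 0 < p) (ha : p ∉ threats a v) :
    run p (b.toList ++ a :: v) ≤ 1 := by
  have hrun : run p (a :: v) = 0 := run_cons_of_ne fun h ↦ ha (mem_threats.2 ⟨hp, h⟩)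
  have := run_append_le p b.toList (a :: v)
  have := Option.length_toList_le (o := b)
  omega

lemma run_round_lt (hb : b ≠ some a) (hp : 0 < p) (ha : p ∉ threats a v) :
    run p (b.toList ++ a :: v) < p := by
  rcases (show 1 ≤ p from hp).eq_or_lt with rfl | hp1
  · cases b with
    | none => exact (run_cons_of_ne fun h ↦ ha (mem_threats.2 ⟨hp, h⟩)).trans_lt hp
    | some b =>
      have hne : (b :: a :: v)[1]? ≠ some b := by simpa using fun h : a = b ↦ hb (by rw [h])
      exact (run_cons_of_ne hne).trans_lt hp
  · exact (run_round_le_one hp ha).trans_lt hp1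

end Run

section Potential

variable {A : Type*} [DecidableEq A] {q : ℝ} {p : ℕ} {a : A} {b : Option A} {v : List A}

/-- The weight of period `p` on the reversed word `v`. The exponent is `⌈(p - run p v) / 2⌉`, the
least number of rounds in which a square of period `p` can be completed. -/
def weight (q : ℝ) (p : ℕ) (v : List A) : ℝ :=
  q ^ ((p + 1 - run p v) / 2)

/-- The total weight of the periods on the reversed word `v`. -/
def potential (q : ℝ) (v : List A) : ℝ :=
  ∑ p ∈ Finset.Icc 1 v.length, weight q p v

/-- The part of the potential carried by the runs that playing the letter `a` continues. -/
def danger (q : ℝ) (a : A) (v : List A) : ℝ :=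
  ∑ p ∈ threats a v, weight q p v

lemma weight_nonneg (hq : 0 ≤ q) (p : ℕ) (v : List A) : 0 ≤ weight q p v :=
  pow_nonneg hq _

lemma weight_append_le (hq₀ : 0 < q) (hq₁ : q ≤ 1) (p : ℕ) {u : List A} (hu : u.length ≤ 2)
    (v : List A) : weight q p (u ++ v) ≤ weight q p v / q := by
  rw [le_div_iff₀ hq₀, weight, weight, ← pow_succ]
  refine pow_le_pow_of_le_one hq₀.le hq₁ ?_
  have := run_append_le p u v
  omega

lemma weight_round_le (hq₀ : 0 ≤ q) (hq₁ : q ≤ 1) (hb : b ≠ some a) (hp : 0 < p)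
    (ha : p ∉ threats a v) : weight q p (b.toList ++ a :: v) ≤ q ^ max 1 (p / 2) := by
  refine pow_le_pow_of_le_one hq₀ hq₁ ?_
  have := run_round_le_one (b := b) hp ha
  have := run_round_lt hb hp ha
  omega

lemma run_add_two_lt_of_mem_threats (hq₀ : 0 < q) (hq₁ : q < 1) (hd : danger q a v < q)
    (hp : p ∈ threats a v) : run p v + 2 < p := by
  have hw : weight q p v < q ^ 1 := by
    rw [pow_one]
    exact (Finset.single_le_sum (fun p _ ↦ weight_nonneg hq₀.le p v) hp).trans_lt hd
  have := (pow_lt_pow_iff_right_of_lt_one₀ hq₀ hq₁).1 hw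
  omega

lemma sum_Icc_pow_max_le (hq₀ : 0 ≤ q) (hq₁ : q < 1) (n : ℕ) :
    ∑ p ∈ Finset.Icc 1 n, q ^ max 1 (p / 2) ≤ q + 2 * q / (1 - q) := by
  have hq : 0 < 1 - q := sub_pos.2 hq₁
  have sum_odd (m : ℕ) : ∑ p ∈ Finset.Icc 1 (2 * m + 1), q ^ max 1 (p / 2) =
      q + 2 * q / (1 - q) * (1 - q ^ m) := by
    induction m with
    | zero => simp
    | succ m ih =>
      have heven : max 1 ((2 * m + 1 + 1) / 2) = m + 1 := by omega
      have hodd : max 1 ((2 * m + 1 + 1 + 1) / 2) = m + 1 := by omega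
      rw [show 2 * (m + 1) + 1 = 2 * m + 1 + 1 + 1 by ring, Finset.sum_Icc_succ_top (by omega),
        Finset.sum_Icc_succ_top (by omega), ih, heven, hodd]
      field_simp
      ring
  calc ∑ p ∈ Finset.Icc 1 n, q ^ max 1 (p / 2)
      ≤ ∑ p ∈ Finset.Icc 1 (2 * n + 1), q ^ max 1 (p / 2) :=
        Finset.sum_le_sum_of_subset_of_nonneg (Finset.Icc_subset_Icc_right (by omega))
          fun p _ _ ↦ pow_nonneg hq₀ _
    _ = q + 2 * q / (1 - q) * (1 - q ^ n) := sum_odd n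
    _ ≤ q + 2 * q / (1 - q) := by
        gcongr
        exact mul_le_of_le_one_right (by positivity) (sub_le_self _ (by positivity))

lemma potential_round_lt (hq₀ : 0 < q) (hq₁ : q < 1) (hb : b ≠ some a) (hd : danger q a v < q) :
    potential q (b.toList ++ a :: v) < 1 + q + 2 * q / (1 - q) := by
  set v' := b.toList ++ a :: v with hv'
  have hlen : v.length ≤ v'.length := by
    simp only [hv', List.length_append, List.length_cons]
    omega
  have hcontinued : ∑ p ∈ threats a v, weight q p v' < 1 := by
    have hle : ∀ p, weight q p v' ≤ weight q p v / q := fun p ↦ by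
      have := weight_append_le (u := b.toList ++ [a]) hq₀ hq₁.le p (by cases b <;> simp) v
      rwa [List.append_assoc] at this
    calc ∑ p ∈ threats a v, weight q p v'
        ≤ ∑ p ∈ threats a v, weight q p v / q := Finset.sum_le_sum fun p _ ↦ hle p
      _ = danger q a v / q := (Finset.sum_div ..).symm
      _ < 1 := (div_lt_one hq₀).2 hd
  have hrestarted : ∑ p ∈ Finset.Icc 1 v'.length \ threats a v, weight q p v' ≤
      q + 2 * q / (1 - q) := by
    calc ∑ p ∈ Finset.Icc 1 v'.length \ threats a v, weight q p v'
        ≤ ∑ p ∈ Finset.Icc 1 v'.length \ threats a v, q ^ max 1 (p / 2) := by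
          refine Finset.sum_le_sum fun p hp ↦ ?_
          obtain ⟨hp, ha⟩ := Finset.mem_sdiff.1 hp
          exact weight_round_le hq₀.le hq₁.le hb (Finset.mem_Icc.1 hp).1 ha
      _ ≤ ∑ p ∈ Finset.Icc 1 v'.length, q ^ max 1 (p / 2) :=
          Finset.sum_le_sum_of_subset_of_nonneg Finset.sdiff_subset fun p _ _ ↦
            pow_nonneg hq₀.le _
      _ ≤ q + 2 * q / (1 - q) := sum_Icc_pow_max_le hq₀.le hq₁ _
  calc potential q v' = ∑ p ∈ Finset.Icc 1 v'.length \ threats a v, weight q p v' +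
        ∑ p ∈ threats a v, weight q p v' := (Finset.sum_sdiff (threats_subset_Icc hlen)).symm
    _ < q + 2 * q / (1 - q) + 1 := add_lt_add_of_le_of_lt hrestarted hcontinued
    _ = 1 + q + 2 * q / (1 - q) := by ring

lemma squareFree_round (hq₀ : 0 < q) (hq₁ : q < 1) (hv : SquareFree v) (hb : b ≠ some a)
    (hd : danger q a v < q) : SquareFree (b.toList ++ a :: v) := by
  have hrun : ∀ c : Option A, c ≠ some a → ∀ p, 0 < p → run p (c.toList ++ a :: v) < p := by
    intro c hc p hp
    by_cases ha : p ∈ threats a v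
    · have := run_add_two_lt_of_mem_threats hq₀ hq₁ hd ha
      have := run_append_le p c.toList (a :: v)
      have := run_cons_le p a v
      have := Option.length_toList_le (o := c)
      omega
    · exact run_round_lt hc hp ha
  have hann : SquareFree (a :: v) := squareFree_cons hv (hrun none (Option.some_ne_none a).symm)
  cases b with
  | none => exact hann
  | some b => exact squareFree_cons hann (hrun (some b) hb)

lemma sum_danger_le_potential (hq : 0 ≤ q) (s : Finset A) (v : List A) :
    ∑ a ∈ s, danger q a v ≤ potential q v := by
  calc ∑ a ∈ s, danger q a v = ∑ p ∈ s.biUnion (threats · v), weight q p v :=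
        (Finset.sum_biUnion fun _ _ _ _ hab ↦ disjoint_threats hab v).symm
    _ ≤ potential q v :=
        Finset.sum_le_sum_of_subset_of_nonneg
          (Finset.biUnion_subset.2 fun _ _ ↦ threats_subset_Icc le_rfl)
          fun p _ _ ↦ weight_nonneg hq p v

lemma exists_danger_lt (hq : 0 ≤ q) {s : Finset A} (h : potential q v < s.card * q) :
    ∃ a ∈ s, danger q a v < q := by
  refine Finset.exists_lt_of_sum_lt ((sum_danger_le_potential hq s v).trans_lt ?_)
  simpa using h

end Potential

section Play

variable {A : Type*}

lemma reverse_playH_two_mul_add_one (ψ : List A → A) (φ : List A → Option A) (n : ℕ) :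
    (playH ψ φ (2 * n + 1)).reverse =
      ψ (playH ψ φ (2 * n)) :: (playH ψ φ (2 * n)).reverse := by
  simp [playH]

lemma reverse_playH_two_mul_add_two (ψ : List A → A) (φ : List A → Option A) (n : ℕ) :
    (playH ψ φ (2 * n + 2)).reverse = (φ (playH ψ φ (2 * n + 1))).toList ++
      ψ (playH ψ φ (2 * n)) :: (playH ψ φ (2 * n)).reverse := by
  have hodd : ¬ Even (2 * n + 1) := by simp
  rw [playH, if_neg hodd, List.reverse_append, reverse_playH_two_mul_add_one]
  cases φ (playH ψ φ (2 * n + 1)) <;> rfl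

lemma ben_move_ne_ann_move {ψ : List A → A} {φ : List A → Option A}
    (hφ : ∀ v : List A, v ≠ [] → φ v ≠ v.getLast?) (n : ℕ) :
    φ (playH ψ φ (2 * n + 1)) ≠ some (ψ (playH ψ φ (2 * n))) := by
  have hne : playH ψ φ (2 * n + 1) ≠ [] := by simp [playH]
  convert hφ _ hne using 1
  simp [playH]

theorem squareFree_playH_of_danger_lt [DecidableEq A] {q c : ℝ} (hq₀ : 0 < q) (hq₁ : q < 1)
    (hc : 1 + q + 2 * q / (1 - q) ≤ c) {ψ : List A → A}
    (hψ : ∀ w, potential q w.reverse < c → danger q (ψ w) w.reverse < q)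
    {φ : List A → Option A} (hφ : ∀ v : List A, v ≠ [] → φ v ≠ v.getLast?) (k : ℕ) :
    SquareFree (playH ψ φ k) := by
  have invariant (n : ℕ) : SquareFree (playH ψ φ (2 * n)).reverse ∧
      potential q (playH ψ φ (2 * n)).reverse < c := by
    induction n with
    | zero =>
      have : 0 < 1 - q := sub_pos.2 hq₁
      have hpos : 0 < c := lt_of_lt_of_le (by positivity) hc
      exact ⟨squareFree_nil, by simpa [playH, potential] using hpos⟩
    | succ n ih =>
      obtain ⟨hsf, hpot⟩ := ih
      have hd := hψ _ hpot
      rw [Nat.mul_succ, reverse_playH_two_mul_add_two]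
      exact ⟨squareFree_round hq₀ hq₁ hsf (ben_move_ne_ann_move hφ n) hd,
        (potential_round_lt hq₀ hq₁ (ben_move_ne_ann_move hφ n) hd).trans_le hc⟩
  rw [← squareFree_reverse]
  obtain ⟨n, rfl | rfl⟩ := k.even_or_odd'
  · exact (invariant n).1
  · obtain ⟨hsf, hpot⟩ := invariant n
    rw [reverse_playH_two_mul_add_one]
    exact squareFree_round (b := none) hq₀ hq₁ hsf (Option.some_ne_none _).symm (hψ _ hpot)

end Play

end HardGame

open HardGame in
theorem stmt_3_general (A : Type*) (s : Finset A) (hs : 7 ≤ s.card) :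
    ∃ ψ : List A → A, (∀ w, ψ w ∈ s) ∧ ∀ φ : List A → Option A,
      (∀ v : List A, v ≠ [] → φ v ≠ v.getLast?) →
      ∀ k : ℕ, SquareFree (playH ψ φ k) := by
  classical
  have hcard : (7 : ℝ) ≤ s.card := by exact_mod_cast hs
  have hmove (w : List A) : ∃ a ∈ s, potential (2 / 5) w.reverse < s.card * (2 / 5) →
      danger (2 / 5) a w.reverse < 2 / 5 := by
    by_cases hw : potential (2 / 5) w.reverse < s.card * (2 / 5)
    · obtain ⟨a, ha, hd⟩ := exists_danger_lt (by norm_num) hw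
      exact ⟨a, ha, fun _ ↦ hd⟩
    · obtain ⟨a, ha⟩ := Finset.card_pos.1 (by omega : 0 < s.card)
      exact ⟨a, ha, fun h ↦ absurd h hw⟩
  choose ψ hψs hψ using hmove
  exact ⟨ψ, hψs, fun φ hφ ↦
    squareFree_playH_of_danger_lt (by norm_num) (by norm_num) (by linarith) hψ hφ⟩

/-- Over a finite alphabet with at least 7 letters, Ann has a winning strategy for the
hard game: there is an Ann strategy `ψ` such that against every Ben strategy `φ` (which
on a nonempty word never plays its last letter, but may skip), every word arising in the
play is square-free. -/
theorem stmt_3 (A : Type*) [Fintype A] (hA : 7 ≤ Fintype.card A) :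
    ∃ ψ : List A → A, ∀ φ : List A → Option A,
      (∀ v : List A, v ≠ [] → φ v ≠ v.getLast?) →
      ∀ k : ℕ, SquareFree (playH ψ φ k) := by
  obtain ⟨ψ, -, hψ⟩ := stmt_3_general A Finset.univ hA
  exact ⟨ψ, hψ⟩
end

section
/- Let α = 12914/6541 and γ = 10635/4441. Assume (C_w)_{w∈Λ} are nonnegative real numbers such that for every v ∈ Λ, C_v ≤ 10635, either C_v = 0 or C_v ≥ 4441, and α·C_v ≤ min_{a∈A} Σ_{b∈A, vab ∈ S^{≤p}_free} C_{Λ(vab)}. Fix any Ben strategy φ, and let S_n and the weights Ŝ_n be defined from φ and (C_w) as in the context. Let β > 1 be a real number such that α − 2γ·β^{(3−p)/2}/(β−1) ≥ β. Then for all n ≥ 1, Ŝ_{n+1} ≥ β·Ŝ_n. -/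
open scoped Classical

/-- `w` contains a factor that is a square of period between `lo` and `hi`. -/
def HasSq {A : Type*} (lo hi : ℕ) (w : List A) : Prop :=
  ∃ u : List A, lo ≤ u.length ∧ u.length ≤ hi ∧ (u ++ u) <:+: w

/-- `w` is a square of period between `lo` and `hi`. -/
def IsSq {A : Type*} (lo hi : ℕ) (w : List A) : Prop :=
  ∃ u : List A, lo ≤ u.length ∧ u.length ≤ hi ∧ w = u ++ u

/-- `w` is a minimal square of period between `lo` and `hi`: it is such a square and no
proper factor of it is such a square. -/
def MinSq {A : Type*} (lo hi : ℕ) (w : List A) : Prop :=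
  IsSq lo hi w ∧ ∀ f : List A, f <:+: w → f ≠ w → ¬ IsSq lo hi f

/-- A word is normalized if it is lexicographically least among its images under
permutations of the alphabet. -/
def Normalized {A : Type*} [LinearOrder A] (w : List A) : Prop :=
  ∀ π : Equiv.Perm A, ¬ List.Lex (· < ·) (w.map π) w

/-- `Λ`: the set of normalized words that are proper prefixes of minimal squares of
period between `lo` and `hi`. -/
def Lam {A : Type*} [LinearOrder A] (lo hi : ℕ) : Set (List A) :=
  {w | Normalized w ∧ ∃ s : List A, MinSq lo hi s ∧ w <+: s ∧ w ≠ s}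

/-- `Λ(w)`: the longest element of `Λ` that is, up to a permutation of the alphabet,
a suffix of `w`. -/
noncomputable def lamOf {A : Type*} [LinearOrder A] (lo hi : ℕ) (w : List A) : List A :=
  if h : ∃ v : List A,
      (v ∈ Lam lo hi ∧ ∃ π : Equiv.Perm A, v.map π <:+ w) ∧
      ∀ v' : List A, (v' ∈ Lam lo hi ∧ ∃ π : Equiv.Perm A, v'.map π <:+ w) →
        v'.length ≤ v.length
  then h.choose else []

/-- A `2⁻`-power: a word of length at least 3 that becomes a square after appending
a suitable letter. -/
def TwoMinusPower {A : Type*} (v : List A) : Prop :=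
  3 ≤ v.length ∧ ∃ a : A, ∃ u : List A, u ≠ [] ∧ v ++ [a] = u ++ u

/-- `w` ends with a `2⁻`-power. -/
def EndsWithTMP {A : Type*} (w : List A) : Prop :=
  ∃ v : List A, v <:+ w ∧ TwoMinusPower v

/-- The conditions required of every word obtained just after one of Ann's moves in
the nonrepetitive game over `Fin 4`: it contains no square of period at least 2, its
weight `C_{Λ(u)}` is positive, and it does not end with a `2⁻`-power. -/
def GoodNR (C : List (Fin 4) → ℝ) (u : List (Fin 4)) : Prop :=
  (∀ x : List (Fin 4), 2 ≤ x.length → ¬ (x ++ x) <:+: u) ∧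
  0 < C (lamOf 2 15 u) ∧ ¬ EndsWithTMP u

/-- The playable words for Ann in the nonrepetitive game over `Fin 4` against Ben's
strategy `φ`: words produced by a sequence of Ann moves (Ann plays first, then after
each word `v` left by Ann, Ben appends `φ v` and Ann answers with some letter `a`)
all of whose intermediate words after Ann's moves satisfy `GoodNR`. -/
inductive PlayableNR (φ : List (Fin 4) → Fin 4) (C : List (Fin 4) → ℝ) :
    List (Fin 4) → Prop
  | base (a : Fin 4) : GoodNR C [a] → PlayableNR φ C [a]
  | step {v : List (Fin 4)} (a : Fin 4) :
      PlayableNR φ C v → GoodNR C (v ++ [φ v, a]) → PlayableNR φ C (v ++ [φ v, a])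

/-- `S_n`: the set of playable words of length `2n - 1`. -/
def SsetNR (φ : List (Fin 4) → Fin 4) (C : List (Fin 4) → ℝ) (n : ℕ) :
    Set (List (Fin 4)) :=
  {v | PlayableNR φ C v ∧ v.length = 2 * n - 1}

/-- `Ŝ_n = Σ_{w ∈ Λ} C_w · |{u ∈ S_n : Λ(u) = w}| = Σ_{v ∈ S_n} C_{Λ(v)}`. -/
noncomputable def ShatNR (φ : List (Fin 4) → Fin 4) (C : List (Fin 4) → ℝ) (n : ℕ) : ℝ :=
  ∑ᶠ v ∈ SsetNR φ C n, C (lamOf 2 15 v)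

/-!
If a minimal square straddles the end of `v` in `v ++ x`, the part of it inside `v` is a copy of an
element of `Λ`, hence a suffix of the copy of `Λ(v)` at the end of `v`. So the local inequality
assumed on `Λ` holds at every word without short squares, and `α * Ŝ_n` is at most the total weight
of all answers of Ann to words of `S_n`.

An answer of positive weight that is not playable ends with a square of period `q ≥ 16`, possibly
lacking its last letter: shorter periods would contradict the local inequality. Since Ben's moves
are known, for each `q` such a word is determined by its prefix in `S_{n + 1 - ⌊q / 2⌋}`, and weighs
at most `γ` times as much as that prefix. The loss is therefore at most
`2 * γ * ∑_{i ≥ 7} Ŝ_{n - i}`; by induction `Ŝ_{n - i} ≤ β⁻¹ ^ i * Ŝ_n`, and a geometric series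
bounds the loss by `2 * γ * β⁻¹ ^ 6 / (β - 1) * Ŝ_n`.
-/

theorem sum_le_sum_add_sum_filter {ι κ R : Type*} [AddCommMonoid R] [PartialOrder R]
    [IsOrderedAddMonoid R] {s t : Finset ι} {I : Finset κ} {P : κ → ι → Prop}
    [∀ k, DecidablePred (P k)] {f : ι → R} (hf : ∀ x, 0 ≤ f x)
    (hcover : ∀ x ∈ s, f x ≠ 0 → x ∈ t ∨ ∃ k ∈ I, P k x) :
    ∑ x ∈ s, f x ≤ ∑ x ∈ t, f x + ∑ k ∈ I, ∑ x ∈ s with P k x, f x := by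
  have hnonneg : ∀ x, ∀ k ∈ I, 0 ≤ if P k x then f x else 0 := fun x k _ => by
    split_ifs
    exacts [hf x, le_rfl]
  have hpointwise : ∀ x ∈ s,
      f x ≤ (if x ∈ t then f x else 0) + ∑ k ∈ I, if P k x then f x else 0 := by
    intro x hx
    rcases eq_or_ne (f x) 0 with hzero | hne
    · simp [hzero]
    rcases hcover x hx hne with hxt | ⟨k, hk, hkx⟩
    · rw [if_pos hxt]
      exact le_add_of_nonneg_right (Finset.sum_nonneg (hnonneg x))
    · have hle := Finset.single_le_sum (hnonneg x) hk
      rw [if_pos hkx] at hle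
      exact hle.trans (le_add_of_nonneg_left (by split_ifs; exacts [hf x, le_rfl]))
  calc ∑ x ∈ s, f x
      ≤ ∑ x ∈ s, ((if x ∈ t then f x else 0) + ∑ k ∈ I, if P k x then f x else 0) :=
        Finset.sum_le_sum hpointwise
    _ = ∑ x ∈ s ∩ t, f x + ∑ k ∈ I, ∑ x ∈ s with P k x, f x := by
        simp only [Finset.sum_filter]
        rw [Finset.sum_add_distrib, Finset.sum_ite_mem, Finset.sum_comm]
    _ ≤ ∑ x ∈ t, f x + ∑ k ∈ I, ∑ x ∈ s with P k x, f x := by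
        gcongr
        exacts [fun x _ _ => hf x, Finset.inter_subset_right]

section Growth

variable {S : ℕ → ℝ} {α β γ : ℝ} {k n : ℕ}

theorem le_inv_pow_mul_of_mul_le_succ (hβ : 0 < β) (hS : ∀ j < n, β * S j ≤ S (j + 1)) {i : ℕ}
    (hi : i ≤ n) : S (n - i) ≤ β⁻¹ ^ i * S n := by
  have hpow : β ^ i * S (n - i) ≤ S (n - i + i) :=
    geom_le (u := fun j => S (n - i + j)) hβ.le i fun j hj => hS (n - i + j) (by omega)
  rwa [Nat.sub_add_cancel hi, ← le_inv_mul_iff₀ (pow_pos hβ i), ← inv_pow] at hpow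

theorem sum_Ico_inv_pow_le (hβ : 1 < β) (k n : ℕ) :
    ∑ i ∈ Finset.Ico (k + 1) n, β⁻¹ ^ i ≤ β⁻¹ ^ k / (β - 1) := by
  have hβ0 : 0 < β := zero_lt_one.trans hβ
  have hβ1 : β - 1 ≠ 0 := sub_ne_zero.mpr hβ.ne'
  calc ∑ i ∈ Finset.Ico (k + 1) n, β⁻¹ ^ i
      ≤ β⁻¹ ^ (k + 1) / (1 - β⁻¹) :=
        geom_sum_Ico_le_of_lt_one (inv_nonneg.mpr hβ0.le) (inv_lt_one_of_one_lt₀ hβ)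
    _ = β⁻¹ ^ k / (β - 1) := by
        rw [show 1 - β⁻¹ = β⁻¹ * (β - 1) by field_simp, pow_succ']
        exact mul_div_mul_left _ _ (inv_ne_zero hβ0.ne')

theorem mul_le_succ_of_mul_le_add_sum (hS : ∀ n, 0 ≤ S n) (hγ : 0 ≤ γ) (hβ : 1 < β)
    (hrec : ∀ n, α * S n ≤ S (n + 1) + γ * ∑ i ∈ Finset.Ico (k + 1) n, S (n - i))
    (hcond : β ≤ α - γ * (β⁻¹ ^ k / (β - 1))) (n : ℕ) : β * S n ≤ S (n + 1) := by
  induction n using Nat.strong_induction_on with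
  | _ n ih =>
    have hsum : ∑ i ∈ Finset.Ico (k + 1) n, S (n - i) ≤ β⁻¹ ^ k / (β - 1) * S n :=
      calc ∑ i ∈ Finset.Ico (k + 1) n, S (n - i)
          ≤ ∑ i ∈ Finset.Ico (k + 1) n, β⁻¹ ^ i * S n := Finset.sum_le_sum fun i hi =>
            le_inv_pow_mul_of_mul_le_succ (zero_lt_one.trans hβ) ih (Finset.mem_Ico.mp hi).2.le
        _ = (∑ i ∈ Finset.Ico (k + 1) n, β⁻¹ ^ i) * S n := (Finset.sum_mul ..).symm
        _ ≤ β⁻¹ ^ k / (β - 1) * S n :=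
            mul_le_mul_of_nonneg_right (sum_Ico_inv_pow_le hβ k n) (hS n)
    calc β * S n ≤ (α - γ * (β⁻¹ ^ k / (β - 1))) * S n := mul_le_mul_of_nonneg_right hcond (hS n)
      _ = α * S n - γ * (β⁻¹ ^ k / (β - 1) * S n) := by ring
      _ ≤ α * S n - γ * ∑ i ∈ Finset.Ico (k + 1) n, S (n - i) := by gcongr
      _ ≤ S (n + 1) := sub_le_iff_le_add.mpr (hrec n)

end Growth

section Squares

variable {A B : Type*} {lo hi : ℕ} {w w' : List A}

theorem IsSq.hasSq (h : IsSq lo hi w) : HasSq lo hi w := by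
  obtain ⟨u, hlo, hhi, rfl⟩ := h
  exact ⟨u, hlo, hhi, List.infix_rfl⟩

theorem HasSq.mono (h : HasSq lo hi w) (hw : w <:+: w') : HasSq lo hi w' := by
  obtain ⟨u, hlo, hhi, hu⟩ := h
  exact ⟨u, hlo, hhi, hu.trans hw⟩

theorem IsSq.exists_minSq {w : List A} (h : IsSq lo hi w) : ∃ s, MinSq lo hi s ∧ s <:+: w := by
  by_cases hmin : ∀ f, f <:+: w → f ≠ w → ¬ IsSq lo hi f
  · exact ⟨w, ⟨h, hmin⟩, List.infix_rfl⟩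
  · push Not at hmin
    obtain ⟨f, hfw, hne, hf⟩ := hmin
    have hlt : f.length < w.length := lt_of_le_of_ne hfw.length_le (mt hfw.eq_of_length hne)
    obtain ⟨s, hs, hsf⟩ := hf.exists_minSq
    exact ⟨s, hs, hsf.trans hfw⟩
termination_by w.length

theorem HasSq.exists_minSq (h : HasSq lo hi w) : ∃ s, MinSq lo hi s ∧ s <:+: w := by
  obtain ⟨u, hlo, hhi, hu⟩ := h
  obtain ⟨s, hs, hsu⟩ := IsSq.exists_minSq ⟨u, hlo, hhi, rfl⟩
  exact ⟨s, hs, hsu.trans hu⟩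

theorem IsSq.map (f : A → B) (h : IsSq lo hi w) : IsSq lo hi (w.map f) := by
  obtain ⟨u, hlo, hhi, rfl⟩ := h
  exact ⟨u.map f, by simpa using hlo, by simpa using hhi, List.map_append⟩

theorem HasSq.map (f : A → B) (h : HasSq lo hi w) : HasSq lo hi (w.map f) := by
  obtain ⟨u, hlo, hhi, hu⟩ := h
  exact ⟨u.map f, by simpa using hlo, by simpa using hhi, by simpa using hu.map f⟩

theorem hasSq_map_equiv (e : A ≃ B) : HasSq lo hi (w.map e) ↔ HasSq lo hi w :=
  ⟨fun h => by simpa using h.map e.symm, HasSq.map e⟩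

theorem MinSq.map_equiv (e : A ≃ B) (h : MinSq lo hi w) : MinSq lo hi (w.map e) := by
  refine ⟨h.1.map e, fun f hf hne hsq => ?_⟩
  have hinfix : f.map e.symm <:+: w := by simpa using hf.map e.symm
  refine h.2 _ hinfix (fun heq => hne ?_) (hsq.map e.symm)
  simp [← heq]

end Squares

section Lam

variable {A : Type*} [LinearOrder A] {lo hi : ℕ} {s t u v w x : List A}

/-- `v` competes to be `Λ(w)`: it lies in `Λ` and is, up to a permutation of the alphabet, a
suffix of `w`. -/
def IsLamSuffix (lo hi : ℕ) (w v : List A) : Prop :=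
  v ∈ Lam lo hi ∧ ∃ π : Equiv.Perm A, v.map π <:+ w

theorem lamOf_eq_dite (w : List A) :
    lamOf lo hi w =
      if h : ∃ v, IsLamSuffix lo hi w v ∧ ∀ v', IsLamSuffix lo hi w v' → v'.length ≤ v.length
      then h.choose else [] :=
  rfl

theorem lamOf_congr (h : ∀ t, IsLamSuffix lo hi v t ↔ IsLamSuffix lo hi w t) :
    lamOf lo hi v = lamOf lo hi w := by
  have heq : IsLamSuffix lo hi v = IsLamSuffix lo hi w := funext fun t => propext (h t)
  simp only [lamOf_eq_dite, heq]

theorem IsLamSuffix.map (π : Equiv.Perm A) (h : IsLamSuffix lo hi w t) :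
    IsLamSuffix lo hi (w.map π) t := by
  obtain ⟨htΛ, σ, hσ⟩ := h
  exact ⟨htΛ, σ.trans π, by simpa using hσ.map π⟩

theorem lamOf_map (π : Equiv.Perm A) (w : List A) : lamOf lo hi (w.map π) = lamOf lo hi w :=
  lamOf_congr fun _ => ⟨fun h => by simpa using h.map π.symm, IsLamSuffix.map π⟩

theorem nil_mem_lam [Nonempty A] (hlo : 0 < lo) (hhi : lo ≤ hi) : ([] : List A) ∈ Lam lo hi := by
  let u := List.replicate lo (Classical.arbitrary A)
  have hu : IsSq lo hi (u ++ u) := ⟨u, by simp [u], by simpa [u] using hhi, rfl⟩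
  obtain ⟨s, hs, -⟩ := hu.exists_minSq
  refine ⟨fun π => by simp, s, hs, List.nil_prefix, ?_⟩
  rintro rfl
  obtain ⟨r, hr, -, hnil⟩ := hs.1
  simp_all

variable [Finite A]

theorem exists_normalized_map (w : List A) : ∃ π : Equiv.Perm A, Normalized (w.map π) := by
  obtain ⟨π, hπ⟩ := Finite.exists_min fun π : Equiv.Perm A => w.map π
  refine ⟨π, fun σ => ?_⟩
  have hle : w.map π ≤ (w.map π).map σ := by simpa using hπ (π.trans σ)
  exact not_lt.mpr hle

theorem MinSq.exists_mem_lam_map_eq (hs : MinSq lo hi s) (hu : u <+: s) (hne : u ≠ s) :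
    ∃ t ∈ Lam lo hi, ∃ π : Equiv.Perm A, t.map π = u := by
  obtain ⟨π, hπ⟩ := exists_normalized_map u
  refine ⟨u.map π, ⟨hπ, s.map π, hs.map_equiv π, hu.map π, fun h => hne ?_⟩, π.symm, by simp⟩
  exact List.map_injective_iff.mpr π.injective h

theorem lamOf_spec (hΛ : [] ∈ Lam (A := A) lo hi) (w : List A) :
    IsLamSuffix lo hi w (lamOf lo hi w) ∧
      ∀ t, IsLamSuffix lo hi w t → t.length ≤ (lamOf lo hi w).length := by
  have hfinite : {t | IsLamSuffix lo hi w t}.Finite :=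
    (List.finite_length_le A w.length).subset fun t ⟨_, π, hπ⟩ => by simpa using hπ.length_le
  have hmax : ∃ t, IsLamSuffix lo hi w t ∧ ∀ t', IsLamSuffix lo hi w t' → t'.length ≤ t.length :=
    Set.exists_max_image _ List.length hfinite ⟨[], hΛ, 1, List.nil_suffix⟩
  rw [lamOf_eq_dite, dif_pos hmax]
  exact hmax.choose_spec

theorem lamOf_mem (hΛ : [] ∈ Lam (A := A) lo hi) (w : List A) : lamOf lo hi w ∈ Lam lo hi :=
  (lamOf_spec hΛ w).1.1

variable {k : List A}

/-- Such a `u` is one of the candidates of which `Λ(v)` is the longest. -/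
theorem MinSq.suffix_of_length_eq_lamOf (hΛ : [] ∈ Lam (A := A) lo hi) (hk : k <:+ v)
    (hlen : k.length = (lamOf lo hi v).length) (hs : MinSq lo hi s) (hus : u <+: s) (hne : u ≠ s)
    (huv : u <:+ v) : u <:+ k := by
  obtain ⟨t, htΛ, π, rfl⟩ := hs.exists_mem_lam_map_eq hus hne
  have hle := (lamOf_spec hΛ v).2 t ⟨htΛ, π, huv⟩
  exact List.suffix_of_suffix_length_le huv hk (by simpa [hlen] using hle)

theorem hasSq_append_iff_of_length_eq_lamOf (hΛ : [] ∈ Lam (A := A) lo hi) (hk : k <:+ v)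
    (hlen : k.length = (lamOf lo hi v).length) (hv : ¬ HasSq lo hi v) :
    HasSq lo hi (v ++ x) ↔ HasSq lo hi (k ++ x) := by
  constructor
  · intro h
    obtain ⟨s, hs, hsx⟩ := h.exists_minSq
    refine hs.1.hasSq.mono ?_
    rcases List.infix_append_iff_ne_nil.mp hsx with hsv | hsx | ⟨u, y, -, hy, rfl, huv, hyx⟩
    · exact absurd (hs.1.hasSq.mono hsv) hv
    · exact List.infix_append_of_infix_right hsx
    · have huk := hs.suffix_of_length_eq_lamOf hΛ hk hlen (List.prefix_append u y) (by simpa) huv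
      exact List.infix_append_iff.mpr (.inr (.inr ⟨u, y, rfl, huk, hyx⟩))
  · obtain ⟨r, rfl⟩ := hk
    exact fun h => h.mono (by simp [List.append_assoc, List.infix_append_right])

theorem lamOf_append_of_length_eq_lamOf (hΛ : [] ∈ Lam (A := A) lo hi) (hk : k <:+ v)
    (hlen : k.length = (lamOf lo hi v).length) :
    lamOf lo hi (v ++ x) = lamOf lo hi (k ++ x) := by
  refine lamOf_congr fun t => and_congr_right fun htΛ => exists_congr fun π =>
    ⟨fun h => ?_, fun h => h.trans (List.suffix_append_self_iff.mpr hk)⟩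
  rcases List.suffix_or_suffix_of_suffix h (List.suffix_append v x) with htx | ⟨u, hu⟩
  · exact List.suffix_append_of_suffix htx
  · obtain ⟨-, s, hs, hts, hne⟩ := htΛ
    have hus : u <+: s.map π := (List.prefix_append u x).trans (hu ▸ hts.map π)
    have hproper : u ≠ s.map π := by
      intro heq
      have hlt : t.length < s.length := lt_of_le_of_ne hts.length_le (mt hts.eq_of_length hne)
      have hlen : u.length + x.length = t.length := by simpa using congrArg List.length hu
      simp [heq] at hlen
      omega
    rw [← hu, List.suffix_append_self_iff] at h ⊢
    exact (hs.map_equiv π).suffix_of_length_eq_lamOf hΛ hk hlen hus hproper h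

end Lam

section Weight

variable {A : Type*} [LinearOrder A] {lo hi : ℕ} {C : List A → ℝ} {α : ℝ} {v x : List A}

/-- The weight `C_{Λ(w)}` of a word `w` of `S^{≤p}_free`, extended by zero to all words; here the
periods `2, …, p` are replaced by `lo, …, hi`. -/
noncomputable def freeWeight (lo hi : ℕ) (C : List A → ℝ) (w : List A) : ℝ :=
  if ¬ HasSq lo hi w then C (lamOf lo hi w) else 0

/-- The key inequality of the coefficients: whatever letter Ben appends to a word of `Λ`, the total
weight of Ann's answers is at least `α` times the weight of that word. -/
def LocalGrowth [Fintype A] (lo hi : ℕ) (C : List A → ℝ) (α : ℝ) : Prop :=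
  ∀ v ∈ Lam lo hi, ∀ a : A, α * C v ≤ ∑ b : A, freeWeight lo hi C (v ++ [a, b])

theorem freeWeight_of_hasSq (h : HasSq lo hi v) : freeWeight lo hi C v = 0 :=
  if_neg (not_not.mpr h)

theorem freeWeight_of_not_hasSq (h : ¬ HasSq lo hi v) :
    freeWeight lo hi C v = C (lamOf lo hi v) :=
  if_pos h

theorem freeWeight_map (π : Equiv.Perm A) (w : List A) :
    freeWeight lo hi C (w.map π) = freeWeight lo hi C w := by
  simp only [freeWeight, hasSq_map_equiv, lamOf_map]

theorem freeWeight_append_lamOf [Finite A] (hΛ : [] ∈ Lam (A := A) lo hi) {π : Equiv.Perm A}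
    (hπ : (lamOf lo hi v).map π <:+ v) (hv : ¬ HasSq lo hi v) :
    freeWeight lo hi C (v ++ x.map π) = freeWeight lo hi C (lamOf lo hi v ++ x) := by
  have hlen : ((lamOf lo hi v).map π).length = (lamOf lo hi v).length := List.length_map _
  rw [← freeWeight_map π (lamOf lo hi v ++ x), List.map_append, freeWeight, freeWeight,
    hasSq_append_iff_of_length_eq_lamOf hΛ hπ hlen hv, lamOf_append_of_length_eq_lamOf hΛ hπ hlen]

theorem freeWeight_nonneg [Finite A] (hΛ : [] ∈ Lam (A := A) lo hi)
    (hC : ∀ v ∈ Lam lo hi, 0 ≤ C v) (w : List A) : 0 ≤ freeWeight lo hi C w := by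
  unfold freeWeight
  split_ifs
  exacts [le_rfl, hC _ (lamOf_mem hΛ w)]

theorem freeWeight_le_lamOf [Finite A] (hΛ : [] ∈ Lam (A := A) lo hi)
    (hC : ∀ v ∈ Lam lo hi, 0 ≤ C v) (w : List A) :
    freeWeight lo hi C w ≤ C (lamOf lo hi w) := by
  unfold freeWeight
  split_ifs
  exacts [hC _ (lamOf_mem hΛ w), le_rfl]

variable [Fintype A]

theorem LocalGrowth.mul_le_sum (hgrowth : LocalGrowth lo hi C α) (hΛ : [] ∈ Lam (A := A) lo hi)
    (hv : ¬ HasSq lo hi v) (a : A) :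
    α * C (lamOf lo hi v) ≤ ∑ b, freeWeight lo hi C (v ++ [a, b]) := by
  obtain ⟨⟨hmem, π, hπ⟩, -⟩ := lamOf_spec hΛ v
  calc α * C (lamOf lo hi v)
      ≤ ∑ b, freeWeight lo hi C (lamOf lo hi v ++ [π.symm a, b]) := hgrowth _ hmem _
    _ = ∑ b, freeWeight lo hi C (v ++ [a, π b]) :=
        Finset.sum_congr rfl fun b _ => by
          simpa using (freeWeight_append_lamOf (x := [π.symm a, b]) hΛ hπ hv).symm
    _ = ∑ b, freeWeight lo hi C (v ++ [a, b]) :=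
        Equiv.sum_comp π fun b => freeWeight lo hi C (v ++ [a, b])

theorem LocalGrowth.nonpos_of_hasSq_concat (hgrowth : LocalGrowth lo hi C α)
    (hΛ : [] ∈ Lam (A := A) lo hi) (hα : 0 < α) (hv : ¬ HasSq lo hi v) {a : A}
    (h : HasSq lo hi (v ++ [a])) : C (lamOf lo hi v) ≤ 0 := by
  have hzero : ∀ b, freeWeight lo hi C (v ++ [a, b]) = 0 := fun b =>
    freeWeight_of_hasSq (h.mono ⟨[], [b], by simp⟩)
  have hle := hgrowth.mul_le_sum hΛ hv a
  simp only [hzero, Finset.sum_const_zero] at hle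
  exact nonpos_of_mul_nonpos_right hle hα

end Weight

section AlmostSquares

variable {A : Type*} {q : ℕ} {w z z' x : List A}

/-- `w` ends with a square of period `q` whose last letter has been erased. -/
def EndsWithAlmostSq (q : ℕ) (w : List A) : Prop :=
  ∃ (a : A) (u : List A), u.length = q ∧ u ++ u <:+ w ++ [a]

theorem endsWithTMP_iff_exists_endsWithAlmostSq :
    EndsWithTMP w ↔ ∃ q, 2 ≤ q ∧ EndsWithAlmostSq q w := by
  constructor
  · rintro ⟨v, hvw, hv, a, u, -, hu⟩
    have hlen : v.length + 1 = u.length + u.length := by simpa using congrArg List.length hu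
    exact ⟨u.length, by omega, a, u, rfl, hu ▸ List.suffix_append_self_iff.mpr hvw⟩
  · rintro ⟨q, hq, a, u, rfl, hu⟩
    rcases List.suffix_concat_iff.mp hu with hnil | ⟨v, hv, hvw⟩
    · simp_all
    · have hlen : u.length + u.length = v.length + 1 := by simpa using congrArg List.length hv
      exact ⟨v, hvw, by omega, a, u, by rintro rfl; simp at hq, hv.symm⟩

/-- Rotating `x` by one letter turns a square into an almost square continued by the first letter
of `x`. -/
theorem endsWithAlmostSq_of_suffix (hx : x ≠ []) (h : x ++ x <:+ w) :
    EndsWithAlmostSq x.length w := by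
  obtain ⟨a, y, rfl⟩ := List.exists_cons_of_ne_nil hx
  refine ⟨a, y ++ [a], by simp, (List.suffix_cons a _).trans ?_⟩
  simpa using List.suffix_append_self_iff (l₃ := [a]).mpr h

theorem EndsWithAlmostSq.two_mul_le (h : EndsWithAlmostSq q w) : 2 * q ≤ w.length + 1 := by
  obtain ⟨a, u, rfl, hu⟩ := h
  have hle : u.length + u.length ≤ w.length + 1 := by simpa using hu.length_le
  omega

theorem EndsWithAlmostSq.eq_of_take_eq (hq : 0 < q) (hz : EndsWithAlmostSq q z)
    (hz' : EndsWithAlmostSq q z') (hlen : z.length = z'.length)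
    (htake : z.take (z.length + 1 - q) = z'.take (z.length + 1 - q)) : z = z' := by
  have take_eq : ∀ {w y u : List A} {a : A}, u.length = q → y ++ (u ++ u) = w ++ [a] →
      w.take (w.length + 1 - q) = y ++ u := by
    intro w y u a hu h
    have hlen : y.length + (u.length + u.length) = w.length + 1 := by
      simpa using congrArg List.length h
    rw [← List.take_append_of_le_length (l₂ := [a]) (by omega), ← h, ← List.append_assoc,
      List.take_append_of_le_length (by simp; omega), List.take_of_length_le (by simp; omega)]
  obtain ⟨a, u, hu, y, h⟩ := hz
  obtain ⟨a', u', hu', y', h'⟩ := hz'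
  rw [take_eq hu h, hlen, take_eq hu' h'] at htake
  obtain ⟨rfl, rfl⟩ := List.append_inj' htake (hu.trans hu'.symm)
  exact (List.append_inj' (h.symm.trans h') rfl).1

end AlmostSquares

section BenStrategy

variable {A : Type*} {φ : List A → A} {i q : ℕ} {v z z' : List A}

/-- Every letter of `z` preceded by an odd number of letters, that is, every letter played by Ben,
is the one prescribed by `φ`. -/
def FollowsBen (φ : List A → A) (z : List A) : Prop :=
  ∀ u a, Odd u.length → u ++ [a] <+: z → a = φ u

theorem FollowsBen.append_move (h : FollowsBen φ v) (hv : Odd v.length) (b : A) :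
    FollowsBen φ (v ++ [φ v, b]) := by
  intro u a hu hpre
  rw [List.append_cons v, List.prefix_concat_iff, List.prefix_concat_iff] at hpre
  rcases hpre with heq | heq | hpre
  · obtain ⟨rfl, -⟩ := List.append_inj' heq rfl
    simp_all [Nat.odd_add_one]
  · obtain ⟨rfl, ha⟩ := List.append_inj' heq rfl
    simpa using ha
  · exact h u a hu hpre

theorem FollowsBen.take_succ (h : FollowsBen φ z) (hi : Odd i) (hlt : i < z.length) :
    z.take (i + 1) = z.take i ++ [φ (z.take i)] := by
  have htake := List.take_succ_eq_append_getElem hlt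
  have hmove : z[i] = φ (z.take i) :=
    h _ _ (by rwa [List.length_take_of_le hlt.le]) (htake ▸ List.take_prefix _ _)
  rw [htake, hmove]

/-- For odd `q` the period alone recovers the erased letters; for even `q` the first of them is a
move of Ben, and the period recovers the others. -/
theorem FollowsBen.eq_of_take_eq (hz : FollowsBen φ z) (hz' : FollowsBen φ z') (hq : 0 < q)
    (hsq : EndsWithAlmostSq q z) (hsq' : EndsWithAlmostSq q z') (hodd : Odd z.length)
    (hlen : z.length = z'.length)
    (htake : z.take (z.length - 2 * (q / 2)) = z'.take (z.length - 2 * (q / 2))) : z = z' := by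
  refine hsq.eq_of_take_eq hq hsq' hlen ?_
  have hle := hsq.two_mul_le
  rw [Nat.odd_iff] at hodd
  rcases Nat.even_or_odd' q with ⟨j, rfl | rfl⟩
  · have hsucc : z.length + 1 - 2 * j = z.length - 2 * (2 * j / 2) + 1 := by omega
    have hi : Odd (z.length - 2 * (2 * j / 2)) := Nat.odd_iff.mpr (by omega)
    rw [hsucc, hz.take_succ hi (by omega), hz'.take_succ hi (by omega), htake]
  · rwa [show z.length + 1 - (2 * j + 1) = z.length - 2 * ((2 * j + 1) / 2) by omega]

end BenStrategy

section Playable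

variable {φ : List (Fin 4) → Fin 4} {C : List (Fin 4) → ℝ} {α m M : ℝ} {n q : ℕ}
  {u v x z : List (Fin 4)} {a b : Fin 4}

theorem PlayableNR.good (h : PlayableNR φ C v) : GoodNR C v := by
  cases h with
  | base a h => exact h
  | step a _ h => exact h

theorem PlayableNR.odd_length (h : PlayableNR φ C v) : Odd v.length := by
  induction h with
  | base a _ => simp
  | step a _ _ ih => simpa using ih.add_even even_two

theorem PlayableNR.followsBen (h : PlayableNR φ C v) : FollowsBen φ v := by
  induction h with
  | base a _ =>
    intro u c hu hpre
    have hle := hpre.length_le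
    have hpos := hu.pos
    simp only [List.length_append, List.length_singleton] at hle
    omega
  | step b h _ ih => exact ih.append_move h.odd_length b

theorem PlayableNR.of_prefix (h : PlayableNR φ C v) (hu : u <+: v) (hodd : Odd u.length) :
    PlayableNR φ C u := by
  induction h with
  | base a h =>
    rcases List.prefix_concat_iff (l₂ := []).mp hu with rfl | hnil
    · exact .base a h
    · simp_all
  | @step v b hplay hgood ih =>
    have hv := hplay.odd_length
    rw [List.append_cons, List.prefix_concat_iff, List.prefix_concat_iff] at hu
    rcases hu with rfl | rfl | hu
    · simpa using PlayableNR.step b hplay hgood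
    · simp_all [Nat.odd_add_one]
    · exact ih hu

theorem nil_mem_lam_two_fifteen : ([] : List (Fin 4)) ∈ Lam 2 15 :=
  nil_mem_lam (by norm_num) (by norm_num)

theorem GoodNR.not_hasSq (h : GoodNR C v) : ¬ HasSq 2 15 v :=
  fun ⟨x, hx, _, hxv⟩ => h.1 x hx hxv

theorem GoodNR.suffix_of_sq_infix (hv : GoodNR C v) (hx : 2 ≤ x.length)
    (h : x ++ x <:+: v ++ [a, b]) : x ++ x <:+ v ++ [a, b] := by
  rw [List.append_cons] at h ⊢
  rcases List.infix_concat_iff.mp h with hsuffix | hva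
  · exact hsuffix
  · refine absurd hv.2.2 (not_not.mpr ?_)
    rcases List.infix_concat_iff.mp hva with hsuffix | hinfix
    · exact endsWithTMP_iff_exists_endsWithAlmostSq.mpr ⟨x.length, hx, a, x, rfl, hsuffix⟩
    · exact absurd hinfix (hv.1 x hx)

/-- By `LocalGrowth`, a word of positive weight does not end with an almost square of period at most
`15`: Ben could complete it. -/
theorem GoodNR.exists_endsWithAlmostSq_of_not (hv : GoodNR C v) (hα : 0 < α)
    (hgrowth : LocalGrowth 2 15 C α) (hfree : ¬ HasSq 2 15 (v ++ [a, b]))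
    (hpos : 0 < C (lamOf 2 15 (v ++ [a, b]))) (hbad : ¬ GoodNR C (v ++ [a, b])) :
    ∃ q, 16 ≤ q ∧ EndsWithAlmostSq q (v ++ [a, b]) := by
  by_cases hTMP : EndsWithTMP (v ++ [a, b])
  · obtain ⟨q, hq, hsq⟩ := endsWithTMP_iff_exists_endsWithAlmostSq.mp hTMP
    refine ⟨q, ?_, hsq⟩
    by_contra! hlt
    obtain ⟨c, u, rfl, hu⟩ := hsq
    have hcompleted : HasSq 2 15 (v ++ [a, b] ++ [c]) := ⟨u, hq, by omega, hu.isInfix⟩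
    exact hpos.not_ge
      (hgrowth.nonpos_of_hasSq_concat nil_mem_lam_two_fifteen hα hfree hcompleted)
  · obtain ⟨x, hx, hxz⟩ : ∃ x, 2 ≤ x.length ∧ x ++ x <:+: v ++ [a, b] := by
      by_contra! hsqfree
      exact hbad ⟨hsqfree, hpos, hTMP⟩
    have hx16 : 16 ≤ x.length := by
      by_contra! hlt
      exact hfree ⟨x, hx, by omega, hxz⟩
    have hne : x ≠ [] := by rintro rfl; simp at hx
    exact ⟨x.length, hx16, endsWithAlmostSq_of_suffix hne (hv.suffix_of_sq_infix hx hxz)⟩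

theorem finite_ssetNR (φ : List (Fin 4) → Fin 4) (C : List (Fin 4) → ℝ) (n : ℕ) :
    (SsetNR φ C n).Finite :=
  (List.finite_length_eq (Fin 4) (2 * n - 1)).subset fun _ hv => hv.2

/-- The set `S_n` as a `Finset`. -/
noncomputable def playableWords (φ : List (Fin 4) → Fin 4) (C : List (Fin 4) → ℝ) (n : ℕ) :
    Finset (List (Fin 4)) :=
  (finite_ssetNR φ C n).toFinset

theorem mem_playableWords :
    v ∈ playableWords φ C n ↔ PlayableNR φ C v ∧ v.length = 2 * n - 1 := by
  simp [playableWords, SsetNR]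

theorem shatNR_eq_sum (φ : List (Fin 4) → Fin 4) (C : List (Fin 4) → ℝ) (n : ℕ) :
    ShatNR φ C n = ∑ v ∈ playableWords φ C n, C (lamOf 2 15 v) :=
  finsum_mem_eq_finite_toFinset_sum _ (finite_ssetNR φ C n)

theorem shatNR_nonneg (hC : ∀ v ∈ Lam 2 15, 0 ≤ C v) (n : ℕ) : 0 ≤ ShatNR φ C n := by
  rw [shatNR_eq_sum]
  exact Finset.sum_nonneg fun v _ => hC _ (lamOf_mem nil_mem_lam_two_fifteen v)

theorem card_playableWords_mul_le (hlb : ∀ v ∈ Lam 2 15, C v = 0 ∨ m ≤ C v) (n : ℕ) :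
    (playableWords φ C n).card * m ≤ ShatNR φ C n := by
  rw [shatNR_eq_sum, ← nsmul_eq_mul]
  refine Finset.card_nsmul_le_sum _ _ _ fun v hv => ?_
  have hpos := (mem_playableWords.mp hv).1.good.2.1
  exact (hlb _ (lamOf_mem nil_mem_lam_two_fifteen v)).resolve_left hpos.ne'

/-- The words obtained from those of `S_n` when Ben plays `φ` and Ann answers with any letter,
whether or not the result is playable. -/
noncomputable def extensions (φ : List (Fin 4) → Fin 4) (C : List (Fin 4) → ℝ) (n : ℕ) :
    Finset (List (Fin 4)) :=
  (playableWords φ C n ×ˢ Finset.univ).image fun x => x.1 ++ [φ x.1, x.2]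

theorem mem_extensions :
    z ∈ extensions φ C n ↔ ∃ v ∈ playableWords φ C n, ∃ b, v ++ [φ v, b] = z := by
  simp [extensions]

theorem length_of_mem_extensions (hz : z ∈ extensions φ C n) : z.length = 2 * n + 1 := by
  obtain ⟨v, hv, b, rfl⟩ := mem_extensions.mp hz
  obtain ⟨hplay, hlen⟩ := mem_playableWords.mp hv
  have hpos := hplay.odd_length.pos
  simp only [List.length_append, List.length_cons, List.length_nil]
  omega

theorem followsBen_of_mem_extensions (hz : z ∈ extensions φ C n) : FollowsBen φ z := by
  obtain ⟨v, hv, b, rfl⟩ := mem_extensions.mp hz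
  have hplay := (mem_playableWords.mp hv).1
  exact hplay.followsBen.append_move hplay.odd_length b

theorem playable_of_prefix_of_mem_extensions (hz : z ∈ extensions φ C n) (hu : u <+: z)
    (hodd : Odd u.length) (hle : u.length ≤ 2 * n - 1) : PlayableNR φ C u := by
  obtain ⟨v, hv, b, rfl⟩ := mem_extensions.mp hz
  obtain ⟨hplay, hlen⟩ := mem_playableWords.mp hv
  exact hplay.of_prefix
    (List.prefix_of_prefix_length_le hu (List.prefix_append _ _) (hlen ▸ hle)) hodd

theorem mul_shatNR_le_sum_extensions (hgrowth : LocalGrowth 2 15 C α) (n : ℕ) :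
    α * ShatNR φ C n ≤ ∑ z ∈ extensions φ C n, freeWeight 2 15 C z := by
  have hinj : Function.Injective fun x : List (Fin 4) × Fin 4 => x.1 ++ [φ x.1, x.2] := by
    rintro ⟨v, b⟩ ⟨v', b'⟩ h
    obtain ⟨rfl, hb⟩ := List.append_inj' h rfl
    simpa using hb
  rw [extensions, Finset.sum_image hinj.injOn, Finset.sum_product, shatNR_eq_sum, Finset.mul_sum]
  exact Finset.sum_le_sum fun v hv => hgrowth.mul_le_sum nil_mem_lam_two_fifteen
    (mem_playableWords.mp hv).1.good.not_hasSq _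

/-- The periods are paired as `2 * i + 2` and `2 * i + 3`, since both lead back to words of
`S_{n-i}`. -/
theorem mem_playableWords_or_endsWithAlmostSq (hC : ∀ v ∈ Lam 2 15, 0 ≤ C v) (hα : 0 < α)
    (hgrowth : LocalGrowth 2 15 C α) (hz : z ∈ extensions φ C n) (hne : freeWeight 2 15 C z ≠ 0) :
    z ∈ playableWords φ C (n + 1) ∨
      ∃ i ∈ Finset.Ico 7 n, EndsWithAlmostSq (2 * i + 2) z ∨ EndsWithAlmostSq (2 * i + 3) z := by
  have hlen := length_of_mem_extensions hz
  obtain ⟨v, hv, b, rfl⟩ := mem_extensions.mp hz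
  have hplay := (mem_playableWords.mp hv).1
  have hfree : ¬ HasSq 2 15 (v ++ [φ v, b]) := mt freeWeight_of_hasSq hne
  rw [freeWeight_of_not_hasSq hfree] at hne
  have hpos := (hC _ (lamOf_mem nil_mem_lam_two_fifteen _)).lt_of_ne' hne
  by_cases hgood : GoodNR C (v ++ [φ v, b])
  · exact .inl (mem_playableWords.mpr ⟨hplay.step b hgood, by omega⟩)
  · obtain ⟨q, hq, hsq⟩ :=
      hplay.good.exists_endsWithAlmostSq_of_not hα hgrowth hfree hpos hgood
    have hle := hsq.two_mul_le
    refine .inr ⟨q / 2 - 1, Finset.mem_Ico.mpr (by omega), ?_⟩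
    rcases Nat.even_or_odd' q with ⟨j, rfl | rfl⟩
    · exact .inl (by rwa [show 2 * (2 * j / 2 - 1) + 2 = 2 * j by omega])
    · exact .inr (by rwa [show 2 * ((2 * j + 1) / 2 - 1) + 3 = 2 * j + 1 by omega])

theorem card_extensions_endsWithAlmostSq_le (hq : 2 ≤ q) :
    ((extensions φ C n).filter (EndsWithAlmostSq q)).card ≤
      (playableWords φ C (n + 1 - q / 2)).card := by
  refine Finset.card_le_card_of_injOn (fun z => z.take (2 * n + 1 - 2 * (q / 2))) ?_ ?_
  · intro z hz
    obtain ⟨hext, hsq⟩ := Finset.mem_filter.mp hz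
    have hlen := length_of_mem_extensions hext
    have hle := hsq.two_mul_le
    have htake : (z.take (2 * n + 1 - 2 * (q / 2))).length = 2 * n + 1 - 2 * (q / 2) :=
      List.length_take_of_le (by omega)
    refine mem_playableWords.mpr ⟨?_, htake.trans (by omega)⟩
    exact playable_of_prefix_of_mem_extensions hext (List.take_prefix _ _)
      (Nat.odd_iff.mpr (by rw [htake]; omega)) (htake.trans_le (by omega))
  · intro z hz z' hz' htake
    obtain ⟨hext, hsq⟩ := Finset.mem_filter.mp hz
    obtain ⟨hext', hsq'⟩ := Finset.mem_filter.mp hz'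
    have hlen := length_of_mem_extensions hext
    have hlen' := length_of_mem_extensions hext'
    exact (followsBen_of_mem_extensions hext).eq_of_take_eq (followsBen_of_mem_extensions hext')
      (by omega) hsq hsq' (hlen ▸ odd_two_mul_add_one n) (hlen.trans hlen'.symm) (by rwa [hlen])

theorem sum_extensions_endsWithAlmostSq_le (hm : 0 < m)
    (hlb : ∀ v ∈ Lam 2 15, C v = 0 ∨ m ≤ C v) (hub : ∀ v ∈ Lam 2 15, C v ≤ M) (n i : ℕ) :
    ∑ z ∈ extensions φ C n with EndsWithAlmostSq (2 * i + 2) z ∨ EndsWithAlmostSq (2 * i + 3) z,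
      freeWeight 2 15 C z ≤ 2 * (M / m) * ShatNR φ C (n - i) := by
  have hC : ∀ v ∈ Lam 2 15, 0 ≤ C v := fun v hv => (hlb v hv).elim Eq.ge hm.le.trans
  have hM : 0 ≤ M := (hC _ nil_mem_lam_two_fifteen).trans (hub _ nil_mem_lam_two_fifteen)
  have hcard : ((extensions φ C n).filter fun z =>
      EndsWithAlmostSq (2 * i + 2) z ∨ EndsWithAlmostSq (2 * i + 3) z).card ≤
      2 * (playableWords φ C (n - i)).card := by
    have heven := card_extensions_endsWithAlmostSq_le (φ := φ) (C := C) (n := n)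
      (show 2 ≤ 2 * i + 2 by omega)
    have hodd := card_extensions_endsWithAlmostSq_le (φ := φ) (C := C) (n := n)
      (show 2 ≤ 2 * i + 3 by omega)
    rw [show n + 1 - (2 * i + 2) / 2 = n - i by omega] at heven
    rw [show n + 1 - (2 * i + 3) / 2 = n - i by omega] at hodd
    rw [Finset.filter_or, two_mul (playableWords φ C (n - i)).card]
    exact (Finset.card_union_le _ _).trans (add_le_add heven hodd)
  have hweight : ∀ z, freeWeight 2 15 C z ≤ M := fun z =>
    (freeWeight_le_lamOf nil_mem_lam_two_fifteen hC z).trans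
      (hub _ (lamOf_mem nil_mem_lam_two_fifteen z))
  calc _ ≤ (_ : ℕ) • M := Finset.sum_le_card_nsmul _ _ _ fun z _ => hweight z
    _ ≤ (2 * (playableWords φ C (n - i)).card) • M := nsmul_le_nsmul_left hM hcard
    _ = 2 * (M / m) * ((playableWords φ C (n - i)).card * m) := by
        rw [nsmul_eq_mul]
        push_cast
        field_simp
    _ ≤ 2 * (M / m) * ShatNR φ C (n - i) := by
        gcongr
        exact card_playableWords_mul_le hlb _

theorem mul_shatNR_le (hα : 0 < α) (hm : 0 < m) (hlb : ∀ v ∈ Lam 2 15, C v = 0 ∨ m ≤ C v)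
    (hub : ∀ v ∈ Lam 2 15, C v ≤ M) (hgrowth : LocalGrowth 2 15 C α) (n : ℕ) :
    α * ShatNR φ C n ≤
      ShatNR φ C (n + 1) + 2 * (M / m) * ∑ i ∈ Finset.Ico 7 n, ShatNR φ C (n - i) := by
  have hC : ∀ v ∈ Lam 2 15, 0 ≤ C v := fun v hv => (hlb v hv).elim Eq.ge hm.le.trans
  calc α * ShatNR φ C n
      ≤ ∑ z ∈ extensions φ C n, freeWeight 2 15 C z := mul_shatNR_le_sum_extensions hgrowth n
    _ ≤ ∑ z ∈ playableWords φ C (n + 1), freeWeight 2 15 C z +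
          ∑ i ∈ Finset.Ico 7 n, ∑ z ∈ extensions φ C n with
            EndsWithAlmostSq (2 * i + 2) z ∨ EndsWithAlmostSq (2 * i + 3) z,
              freeWeight 2 15 C z :=
        sum_le_sum_add_sum_filter (freeWeight_nonneg nil_mem_lam_two_fifteen hC)
          fun z hz => mem_playableWords_or_endsWithAlmostSq hC hα hgrowth hz
    _ ≤ ShatNR φ C (n + 1) + ∑ i ∈ Finset.Ico 7 n, 2 * (M / m) * ShatNR φ C (n - i) := by
        rw [shatNR_eq_sum φ C (n + 1)]
        exact add_le_add
          (Finset.sum_le_sum fun z _ => freeWeight_le_lamOf nil_mem_lam_two_fifteen hC z)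
          (Finset.sum_le_sum fun i _ => sum_extensions_endsWithAlmostSq_le hm hlb hub n i)
    _ = ShatNR φ C (n + 1) + 2 * (M / m) * ∑ i ∈ Finset.Ico 7 n, ShatNR φ C (n - i) := by
        rw [Finset.mul_sum]

end Playable

theorem stmt_6_general {C : List (Fin 4) → ℝ} {α m M : ℝ} (hm : 0 < m)
    (hub : ∀ v ∈ Lam 2 15, C v ≤ M) (hlb : ∀ v ∈ Lam 2 15, C v = 0 ∨ m ≤ C v)
    (hgrowth : LocalGrowth 2 15 C α) (φ : List (Fin 4) → Fin 4) {β : ℝ} (hβ : 1 < β)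
    (hcond : α - 2 * (M / m) * β ^ (((3 : ℤ) - 15) / 2) / (β - 1) ≥ β) :
    ∀ n : ℕ, 1 ≤ n → ShatNR φ C (n + 1) ≥ β * ShatNR φ C n := by
  have hC : ∀ v ∈ Lam 2 15, 0 ≤ C v := fun v hv => (hlb v hv).elim Eq.ge hm.le.trans
  have hM : 0 ≤ M := (hC _ nil_mem_lam_two_fifteen).trans (hub _ nil_mem_lam_two_fifteen)
  have hβ1 : 0 < β - 1 := sub_pos.mpr hβ
  have hpow : β ^ (((3 : ℤ) - 15) / 2) = β⁻¹ ^ 6 := by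
    rw [show ((3 : ℤ) - 15) / 2 = -((6 : ℕ) : ℤ) by norm_num, zpow_neg, zpow_natCast, inv_pow]
  rw [hpow, mul_div_assoc] at hcond
  have hloss : 0 ≤ 2 * (M / m) * (β⁻¹ ^ 6 / (β - 1)) := by positivity
  have hα : 0 < α := by linarith
  exact fun n _ => mul_le_succ_of_mul_le_add_sum (shatNR_nonneg hC) (by positivity) hβ
    (mul_shatNR_le hα hm hlb hub hgrowth) hcond n

/-- With coefficients as in the key lemma for the nonrepetitive game over `Fin 4`
(`p = 15`, `α = 12914/6541`, `γ = 10635/4441`), for any Ben strategy `φ` and any real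
`β > 1` with `α - 2γ·β^((3-p)/2)/(β-1) ≥ β`, the weights satisfy `Ŝ_{n+1} ≥ β·Ŝ_n`
for all `n ≥ 1`. -/
theorem stmt_6 (C : List (Fin 4) → ℝ)
    (hnn : ∀ v ∈ Lam 2 15, 0 ≤ C v)
    (hub : ∀ v ∈ Lam 2 15, C v ≤ 10635)
    (hlb : ∀ v ∈ Lam 2 15, C v = 0 ∨ 4441 ≤ C v)
    (hmin : ∀ v ∈ Lam 2 15, ∀ a : Fin 4,
      (12914 / 6541 : ℝ) * C v ≤
        ∑ b : Fin 4,
          if ¬ HasSq 2 15 (v ++ [a, b]) then C (lamOf 2 15 (v ++ [a, b])) else 0)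
    (φ : List (Fin 4) → Fin 4) (β : ℝ) (hβ : 1 < β)
    (hcond : (12914 / 6541 : ℝ) -
        2 * (10635 / 4441 : ℝ) * β ^ (((3 : ℤ) - 15) / 2) / (β - 1) ≥ β) :
    ∀ n : ℕ, 1 ≤ n → ShatNR φ C (n + 1) ≥ β * ShatNR φ C n := by
  exact stmt_6_general (by norm_num) hub hlb hmin φ hβ hcond
end
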